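/- arXiv:1902.06108 — 2 statements merged into one kernel-verified Lean document; each statement's English description precedes it below -/
import Mathlib

section
/- Let c ∈ C ↦ H_c be a continuous family (for the C² compact-open topology) of C²-convex-in-the-fiber Hamiltonians on T*M, C a metric space. Fix (x, c₀, λ₀) ∈ 𝒰₊^∞ and ε > 0. Then there exist a neighborhood 𝒩₋ of (x, c₀, λ₀) in T*M × C × ℝ and T > 0 such that: (a) for every (t, y, c, λ) ∈ 𝒰₊ with (y, c, λ) ∈ 𝒩₋ and t ≥ T, one has h(t, y, c, λ) ≥ h₋(x, c₀, λ₀) − ε·Id; (b) for every (y, c, λ) ∈ 𝒩₋ ∩ 𝒰₊^∞, one has h₋(y, c, λ) ≥ h₋(x, c₀, λ₀) − ε·Id. -/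
/-!
Throughout, the closed manifold `M = 𝕋^d = ℝ^d/ℤ^d` is modelled by `ℤ^d`-periodic
functions on `ℝ^d` (with the Euclidean structure), and its (co)tangent bundle
`T^*𝕋^d = 𝕋^d × ℝ^d` by `ℤ^d`-periodic (in the base variable) data on `ℝ^d × ℝ^d`.
-/

open scoped RealInnerProductSpace
open Filter MeasureTheory Metric Set Asymptotics

noncomputable section

/-- The universal cover `ℝ^d` of the torus `𝕋^d`. -/
abbrev Euc (d : ℕ) : Type := EuclideanSpace ℝ (Fin d)

/-- The phase space `T^*𝕋^d`, modelled as `ℝ^d × ℝ^d` with `ℤ^d`-periodic data. -/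
abbrev Phase (d : ℕ) : Type := Euc d × Euc d

/-- An integer vector, viewed in `ℝ^d`. -/
def intVec {d : ℕ} (k : Fin d → ℤ) : Euc d := WithLp.toLp 2 fun i => (k i : ℝ)

/-- `f` descends to the torus `𝕋^d = ℝ^d/ℤ^d`. -/
def PerFun {d : ℕ} {α : Type*} (f : Euc d → α) : Prop :=
  ∀ (k : Fin d → ℤ) (x : Euc d), f (x + intVec k) = f x

/-- `H` descends to `T^*𝕋^d = 𝕋^d × ℝ^d`. -/
def PerPhase {d : ℕ} {α : Type*} (H : Phase d → α) : Prop :=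
  ∀ (k : Fin d → ℤ) (q p : Euc d), H (q + intVec k, p) = H (q, p)

/-- Positive definiteness of the fiberwise Hessian. -/
def ConvexInFiber {d : ℕ} (H : Phase d → ℝ) : Prop :=
  ∀ q p v, v ≠ 0 → 0 < iteratedFDeriv ℝ 2 (fun p' => H (q, p')) p ![v, v]

/-- A `C²` Tonelli Hamiltonian on `T^*𝕋^d`. -/
structure TonelliHam {d : ℕ} (H : Phase d → ℝ) : Prop where
  periodic : PerPhase H
  smooth : ContDiff ℝ 2 H
  convex : ConvexInFiber H
  superlinear : ∀ A : ℝ, ∃ B : ℝ, ∀ q p, A * ‖p‖ + B ≤ H (q, p)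

/-- A `C²` Tonelli Lagrangian on `T𝕋^d`. -/
structure TonelliLag {d : ℕ} (L : Phase d → ℝ) : Prop where
  periodic : PerPhase L
  smooth : ContDiff ℝ 2 L
  convex : ConvexInFiber L
  superlinear : ∀ A : ℝ, ∃ B : ℝ, ∀ q v, A * ‖v‖ + B ≤ L (q, v)

/-- The Lagrangian associated to `H` by Legendre duality. -/
def LegendreL {d : ℕ} (H : Phase d → ℝ) (x : Phase d) : ℝ :=
  sSup {r | ∃ p : Euc d, r = ⟪p, x.2⟫ - H (x.1, p)}

/-- The Mañé critical value `α(H)`. -/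
def maneCritical {d : ℕ} (H : Phase d → ℝ) : ℝ :=
  sInf {c | ∃ u : Euc d → ℝ, ContDiff ℝ (⊤ : ℕ∞) u ∧ PerFun u ∧ ∀ q, H (q, gradient u q) ≤ c}

/-- The Mañé critical value `α(c)` of the cohomology class of the constant form `cf`. -/
def maneCriticalOf {d : ℕ} (H : Phase d → ℝ) (cf : Euc d) : ℝ :=
  maneCritical fun x : Phase d => H (x.1, cf + x.2)

/-- `γ` is absolutely continuous on `[a,b]` with a.e. derivative `γ'`. -/
def ACOn {d : ℕ} (γ γ' : ℝ → Euc d) (a b : ℝ) : Prop :=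
  IntervalIntegrable γ' volume a b ∧ ∀ t ∈ Icc a b, γ t = γ a + ∫ s in a..t, γ' s

/-- Values entering the (discounted, cohomologically twisted) Lax–Oleinik infimum. -/
def LOvals {d : ℕ} (L : Phase d → ℝ) (cf : Euc d) (av lam : ℝ) (u : Euc d → ℝ) (t : ℝ)
    (q : Euc d) : Set ℝ :=
  {r | ∃ γ γ' : ℝ → Euc d, ACOn γ γ' (-t) 0 ∧ γ 0 = q ∧
     IntervalIntegrable (fun s => Real.exp (lam * s) * (L (γ s, γ' s) - ⟪cf, γ' s⟫ + av))
       volume (-t) 0 ∧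
     r = Real.exp (-(lam * t)) * u (γ (-t)) +
         ∫ s in (-t)..0, Real.exp (lam * s) * (L (γ s, γ' s) - ⟪cf, γ' s⟫ + av)}

/-- The (discounted, twisted) Lax–Oleinik semigroup `T^{cf,λ}_t u (q)`. -/
def LaxOleinik {d : ℕ} (L : Phase d → ℝ) (cf : Euc d) (av lam : ℝ) (u : Euc d → ℝ) (t : ℝ)
    (q : Euc d) : ℝ :=
  sInf (LOvals L cf av lam u t q)

/-- A weak K.A.M. solution: a fixed point of the Lax–Oleinik semigroup. -/
def IsWeakKAM {d : ℕ} (H : Phase d → ℝ) (u : Euc d → ℝ) : Prop :=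
  Continuous u ∧ PerFun u ∧
    ∀ t > (0:ℝ), ∀ q, LaxOleinik (LegendreL H) 0 (maneCritical H) 0 u t q = u q

/-- A fixed point of the modified Lax–Oleinik semigroup `T^c_t` for the class `cf`. -/
def IsFixedPtModified {d : ℕ} (H : Phase d → ℝ) (cf : Euc d) (u : Euc d → ℝ) : Prop :=
  Continuous u ∧ PerFun u ∧
    ∀ t > (0:ℝ), ∀ q, LaxOleinik (LegendreL H) cf (maneCriticalOf H cf) 0 u t q = u q

/-- The discounted solution `u_λ` of `λu + H(x,du) = α(H)`, via its variational formula. -/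
def IsDiscountedSol {d : ℕ} (H : Phase d → ℝ) (lam : ℝ) (u : Euc d → ℝ) : Prop :=
  Continuous u ∧ PerFun u ∧
    ∀ q, u q = sInf {r | ∃ γ γ' : ℝ → Euc d, (∀ a ≤ (0:ℝ), ACOn γ γ' a 0) ∧ γ 0 = q ∧
      IntegrableOn (fun s => Real.exp (lam * s) * (LegendreL H (γ s, γ' s) + maneCritical H))
        (Iic 0) volume ∧
      r = ∫ s in Iic (0:ℝ), Real.exp (lam * s) * (LegendreL H (γ s, γ' s) + maneCritical H)}

/-- The `λ`-discounted Hamiltonian vector field `(∂H/∂p, -∂H/∂q - λp)`. -/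
def hamVF {d : ℕ} (H : Phase d → ℝ) (lam : ℝ) (x : Phase d) : Phase d :=
  (gradient (fun p => H (x.1, p)) x.2, -gradient (fun q => H (q, x.2)) x.1 - lam • x.2)

/-- `φ` is the (conformally) Hamiltonian flow of equation (1) for `(H, λ)`. -/
def IsConformalFlow {d : ℕ} (H : Phase d → ℝ) (lam : ℝ) (φ : ℝ → Phase d → Phase d) : Prop :=
  (∀ x, φ 0 x = x) ∧ (∀ s t x, φ s (φ t x) = φ (s + t) x) ∧
    ∀ x t, HasDerivAt (fun τ => φ τ x) (hamVF H lam (φ t x)) t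

/-- The vertical subspace `V = ker Dπ`. -/
def Vert (d : ℕ) : Submodule ℝ (Phase d) :=
  Submodule.prod (⊥ : Submodule ℝ (Euc d)) (⊤ : Submodule ℝ (Euc d))

/-- The image `Dφ_t(y) V(y)` of the vertical at `y` by the linearized flow. -/
def pushV {d : ℕ} (φ : ℝ → Phase d → Phase d) (t : ℝ) (y : Phase d) : Submodule ℝ (Phase d) :=
  Submodule.map (fderiv ℝ (φ t) y).toLinearMap (Vert d)

/-- `G_t(x) = Dφ_t V(φ_{-t} x)`. -/
def GreenT {d : ℕ} (φ : ℝ → Phase d → Phase d) (t : ℝ) (x : Phase d) : Submodule ℝ (Phase d) :=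
  pushV φ t (φ (-t) x)

/-- The piece of orbit `(φ_t x)_{t ∈ I}` has no conjugate points. -/
def NoConjPts {d : ℕ} (φ : ℝ → Phase d → Phase d) (x : Phase d) (I : Set ℝ) : Prop :=
  ∀ s ∈ I, ∀ t ∈ I, s ≠ t → pushV φ (t - s) (φ s x) ⊓ Vert d = ⊥

/-- `S` is the height `ℋ(G)` of the Lagrangian subspace `G`:
`G` is the graph `{(δθ, S δθ)}` of the symmetric map `S`. -/
def IsHeight {d : ℕ} (G : Submodule ℝ (Phase d)) (S : Euc d →L[ℝ] Euc d) : Prop :=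
  (∀ v w, ⟪S v, w⟫ = ⟪v, S w⟫) ∧ G = LinearMap.graph (S : Euc d →ₗ[ℝ] Euc d)

open Classical in
/-- The height of a subspace transverse to the vertical (junk value `0` otherwise). -/
def heightOf {d : ℕ} (G : Submodule ℝ (Phase d)) : Euc d →L[ℝ] Euc d :=
  if h : ∃ S, IsHeight G S then h.choose else 0

/-- Order of symmetric operators as quadratic forms. -/
def SymLE {d : ℕ} (S T : Euc d →L[ℝ] Euc d) : Prop := ∀ v, ⟪S v, v⟫ ≤ ⟪T v, v⟫

/-- Strict order of symmetric operators as quadratic forms (positive definite difference). -/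
def SymLT {d : ℕ} (S T : Euc d →L[ℝ] Euc d) : Prop := ∀ v, v ≠ 0 → ⟪S v, v⟫ < ⟪T v, v⟫

/-- `u` has (Alexandrov) derivative `p` and second derivative `S` at `θ`. -/
def HasAlexandrovAt {d : ℕ} (u : Euc d → ℝ) (p : Euc d) (S : Euc d →L[ℝ] Euc d)
    (θ : Euc d) : Prop :=
  HasGradientAt u p θ ∧
    (fun y => u y - u θ - ⟪p, y - θ⟫ - (1/2) * ⟪S (y - θ), y - θ⟫)
      =o[nhds θ] fun y => ‖y - θ‖ ^ 2

open Classical in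
/-- The Alexandrov second derivative `D²u(θ)` (junk value `0` where it does not exist). -/
def D2 {d : ℕ} (u : Euc d → ℝ) (θ : Euc d) : Euc d →L[ℝ] Euc d :=
  if h : ∃ pS : Euc d × (Euc d →L[ℝ] Euc d), HasAlexandrovAt u pS.1 pS.2 θ then h.choose.2 else 0

/-- `‖S‖ = sup_{‖v‖=1} |S(v,v)|`. -/
def qNorm {d : ℕ} (S : Euc d →L[ℝ] Euc d) : ℝ :=
  ⨆ v : (sphere (0 : Euc d) 1 : Set (Euc d)), |⟪S v.1, v.1⟫|

/-- A fundamental domain of `𝕋^d` in `ℝ^d`. -/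
def fundCube (d : ℕ) : Set (Euc d) := {x | ∀ i, x i ∈ Ico (0:ℝ) 1}

/-- The distance `d_{2,1}(u,v) = ∫_{𝕋^d} ‖D²u - D²v‖`. -/
def d21 {d : ℕ} (u v : Euc d → ℝ) : ℝ := ∫ θ in fundCube d, qNorm (D2 u θ - D2 v θ)

/-- Semi-concavity. -/
def SemiConcave {d : ℕ} (u : Euc d → ℝ) : Prop :=
  ∃ K : ℝ, ∀ x, ∃ p, ∀ y, u y ≤ u x + ⟪p, y - x⟫ + K * ‖y - x‖ ^ 2

/-- `u` is upper Green regular: at Lebesgue-a.e. `θ`, `ℋ(G₊(θ, du(θ))) = D²u(θ)`. -/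
def UpperGreenRegular {d : ℕ} (φ : ℝ → Phase d → Phase d) (u : Euc d → ℝ) : Prop :=
  ∀ᵐ θ ∂(volume : Measure (Euc d)), ∃ p S, HasGradientAt u p θ ∧
    (∀ t > (0:ℝ), ∃ S', IsHeight (GreenT φ t (θ, p)) S') ∧
    Tendsto (fun t : ℝ => heightOf (GreenT φ t (θ, p))) atTop (nhds S) ∧
    HasAlexandrovAt u p S θ

/-- The graph `𝒢(du) ⊂ T^*𝕋^d` of the differential of `u`. -/
def gradGraph {d : ℕ} (u : Euc d → ℝ) : Set (Phase d) := {x | HasGradientAt u x.2 x.1}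

/-- The graph `𝒢(η_c + du)` where `η_c` is the constant form `cf`. -/
def gradGraphShift {d : ℕ} (cf : Euc d) (u : Euc d → ℝ) : Set (Phase d) :=
  {x | ∃ p, HasGradientAt u p x.1 ∧ x.2 = cf + p}

/-- Continuity of `c ↦ H_c` for the `C²` compact-open topology. -/
def C2CompactOpenCont {d : ℕ} {C : Type*} [MetricSpace C] (Hfam : C → Phase d → ℝ) : Prop :=
  ∀ (c0 : C) (K : Set (Phase d)), IsCompact K → ∀ ε > (0:ℝ), ∃ δ > (0:ℝ), ∀ c : C,
    dist c c0 < δ → ∀ j : ℕ, j ≤ 2 → ∀ x ∈ K,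
      ‖iteratedFDeriv ℝ j (Hfam c) x - iteratedFDeriv ℝ j (Hfam c0) x‖ ≤ ε

/-- `h(t, x, c, λ) = ℋ(G_{-t}^{c,λ}(x))`, the height of `Dφ_{-t} V(φ_t x)`. -/
def hGreenMinus {d : ℕ} (φ : ℝ → Phase d → Phase d) (t : ℝ) (x : Phase d) :
    Euc d →L[ℝ] Euc d :=
  heightOf (pushV φ (-t) (φ t x))

/-- `h(-t, x, c, λ) = ℋ(G_t^{c,λ}(x))`, the height of `Dφ_t V(φ_{-t} x)`. -/
def hGreenPlus {d : ℕ} (φ : ℝ → Phase d → Phase d) (t : ℝ) (x : Phase d) :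
    Euc d →L[ℝ] Euc d :=
  heightOf (pushV φ t (φ (-t) x))

/-!
The linearized conformal flow multiplies the symplectic form by `exp (-λ t)`. Hence, as long as
`∂q/∂p` is invertible along the orbit of `x`, the preimage of the vertical under `Dφ_t(x)` is the
graph of the symmetric map `h(t, x) = -(∂q/∂p)⁻¹ (∂q/∂q)`, and the derivative of its quadratic form
in `t` is, up to a positive factor, the fiberwise Hessian of the Hamiltonian evaluated on a vertical
vector. So `h` increases with `t`. At a fixed time `T` it depends continuously on `(x, c, λ)`,
because the flow is `C¹` in `x` with derivative continuous in the parameters. Thus `h₋` is locally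
the supremum of the continuous functions `h(T, ·)`, hence lower semicontinuous: `h(T, ·)` is already
`ε`-close to `h₋(x, c₀, λ₀)` near `(x, c₀, λ₀)` for some `T`, and later times only increase it.
-/

section Gronwall

variable {E : Type*} [NormedAddCommGroup E] [NormedSpace ℝ E]

theorem norm_le_mul_exp_of_norm_deriv_le {f f' : ℝ → E} {T K η e r : ℝ} (hK : 0 ≤ K)
    (hf : ∀ t ∈ Icc 0 T, HasDerivAt f (f' t) t) (hη : 0 ≤ η) (h0 : ‖f 0‖ ≤ η) (he : e < η)
    (hr : η * Real.exp ((K + 1) * T) ≤ r)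
    (hf' : ∀ t ∈ Icc 0 T, ‖f t‖ ≤ r → ‖f' t‖ ≤ K * ‖f t‖ + e) {t : ℝ} (ht : t ∈ Icc 0 T) :
    ‖f t‖ ≤ η * Real.exp ((K + 1) * t) := by
  refine image_norm_le_of_norm_deriv_right_lt_deriv_boundary (f' := f')
    (B' := fun t => η * (Real.exp ((K + 1) * t) * ((K + 1) * 1)))
    (fun t ht => (hf t ht).continuousAt.continuousWithinAt)
    (fun t ht => (hf t (Ico_subset_Icc_self ht)).hasDerivWithinAt) (by simpa using h0)
    (fun t => (((hasDerivAt_id t).const_mul (K + 1)).exp).const_mul η) ?_ ht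
  intro t ht htf
  have hB_le : η * Real.exp ((K + 1) * t) ≤ r := by
    refine le_trans ?_ hr
    have := ht.2.le
    gcongr
  have hη_le : η ≤ η * Real.exp ((K + 1) * t) :=
    le_mul_of_one_le_right hη (Real.one_le_exp (mul_nonneg (by linarith) ht.1))
  have hbound := hf' t (Ico_subset_Icc_self ht) (htf ▸ hB_le)
  rw [htf] at hbound
  simp only [id_eq, mul_one] at hbound ⊢
  linarith

theorem tendstoUniformlyOn_of_norm_deriv_sub_le {ι : Type*} {l : Filter ι} {f f' : ι → ℝ → E}
    {f₀ f₀' : ℝ → E} {T K r : ℝ} (hK : 0 ≤ K) (hr : 0 < r)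
    (hf : ∀ i, ∀ t ∈ Icc 0 T, HasDerivAt (f i) (f' i t) t)
    (hf₀ : ∀ t ∈ Icc 0 T, HasDerivAt f₀ (f₀' t) t)
    (h0 : Tendsto (fun i => f i 0) l (nhds (f₀ 0)))
    (hf' : ∀ e > 0, ∀ᶠ i in l, ∀ t ∈ Icc 0 T, ‖f i t - f₀ t‖ ≤ r →
      ‖f' i t - f₀' t‖ ≤ K * ‖f i t - f₀ t‖ + e) :
    TendstoUniformlyOn f f₀ l (Icc 0 T) := by
  rw [Metric.tendstoUniformlyOn_iff]
  intro ε hε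
  set G := Real.exp ((K + 1) * T)
  set η := min (ε / 2) r / G
  have hη : 0 < η := by positivity
  have hηG : η * G = min (ε / 2) r := div_mul_cancel₀ _ (Real.exp_pos _).ne'
  filter_upwards [h0.eventually (closedBall_mem_nhds (f₀ 0) hη), hf' (η / 2) (half_pos hη)]
    with i hi0 hi t ht
  rw [dist_eq_norm] at hi0
  have hit := norm_le_mul_exp_of_norm_deriv_le hK (fun t ht => (hf i t ht).sub (hf₀ t ht)) hη.le hi0
    (half_lt_self hη) (hηG.trans_le (min_le_right _ _)) hi ht
  have hmono : η * Real.exp ((K + 1) * t) ≤ η * G := by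
    have := ht.2
    simp only [G]
    gcongr
  rw [dist_eq_norm']
  exact (hit.trans hmono).trans_lt (by linarith [min_le_left (ε / 2) r])

end Gronwall

section LipschitzODE

variable {E : Type*} [NormedAddCommGroup E] [NormedSpace ℝ E]

theorem exp_neg_mul_integral_exp_le {μ t : ℝ} (hμ : 0 < μ) :
    Real.exp (-(μ * t)) * ∫ s in (0 : ℝ)..t, Real.exp (μ * s) ≤ μ⁻¹ := by
  have hint : ∫ s in (0 : ℝ)..t, Real.exp (μ * s) = μ⁻¹ * (Real.exp (μ * t) - 1) := by
    simp [intervalIntegral.integral_comp_mul_left (fun s => Real.exp s) hμ.ne']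
  have hexp : Real.exp (-(μ * t)) * Real.exp (μ * t) = 1 := by rw [← Real.exp_add]; simp
  rw [hint]
  calc Real.exp (-(μ * t)) * (μ⁻¹ * (Real.exp (μ * t) - 1))
      = μ⁻¹ * (1 - Real.exp (-(μ * t))) := by linear_combination μ⁻¹ * hexp
    _ ≤ μ⁻¹ := mul_le_of_le_one_right (by positivity) (by linarith [Real.exp_pos (-(μ * t))])

variable {v : ℝ → E → E} {K : NNReal} {T : ℝ}

/-- The velocity `v s (α s)` along the curve `α s = exp (μ s) u s`, where `u` is a curve on `[0, T]`
extended to `ℝ` by constants. -/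
def weightedVelocity (v : ℝ → E → E) (μ : ℝ) (hT : 0 ≤ T) (u : C(Icc (0 : ℝ) T, E)) (s : ℝ) : E :=
  v s (Real.exp (μ * s) • u (projIcc 0 T hT s))

theorem continuous_weightedVelocity (hv : Continuous (Function.uncurry v)) (μ : ℝ) (hT : 0 ≤ T)
    (u : C(Icc (0 : ℝ) T, E)) : Continuous (weightedVelocity v μ hT u) :=
  hv.comp (by fun_prop : Continuous fun s : ℝ => (s, Real.exp (μ * s) • u (projIcc 0 T hT s)))

theorem dist_weightedVelocity_le {s : ℝ} (hv : LipschitzWith K (v s)) (μ : ℝ) (hT : 0 ≤ T)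
    (u w : C(Icc (0 : ℝ) T, E)) :
    dist (weightedVelocity v μ hT u s) (weightedVelocity v μ hT w s)
      ≤ K * dist u w * Real.exp (μ * s) :=
  calc _ ≤ K * dist (Real.exp (μ * s) • u (projIcc 0 T hT s))
        (Real.exp (μ * s) • w (projIcc 0 T hT s)) := hv.dist_le_mul _ _
    _ = K * (Real.exp (μ * s) * dist (u (projIcc 0 T hT s)) (w (projIcc 0 T hT s))) := by
      rw [dist_smul₀, Real.norm_of_nonneg (Real.exp_pos _).le]
    _ ≤ K * (Real.exp (μ * s) * dist u w) := by gcongr; exact ContinuousMap.dist_apply_le_dist _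
    _ = K * dist u w * Real.exp (μ * s) := by ring

/-- The Picard operator `α ↦ (t ↦ x₀ + ∫₀ᵗ v(s, α s) ds)` of `α' = v(t, α)` on `[0, T]`, read in
terms of `u t = exp (-μ t) α t`. The exponential weight makes it a contraction on the whole interval
for the supremum norm, whatever `T` is. -/
def weightedPicard (hv : Continuous (Function.uncurry v)) (μ : ℝ) (hT : 0 ≤ T) (x₀ : E)
    (u : C(Icc (0 : ℝ) T, E)) : C(Icc (0 : ℝ) T, E) where
  toFun t := Real.exp (-(μ * t)) • (x₀ + ∫ s in (0 : ℝ)..t, weightedVelocity v μ hT u s)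
  continuous_toFun := by
    have hint : Continuous fun t => ∫ s in (0 : ℝ)..t, weightedVelocity v μ hT u s :=
      intervalIntegral.continuous_primitive
        (fun a b => (continuous_weightedVelocity hv μ hT u).intervalIntegrable a b) 0
    fun_prop

theorem contractingWith_weightedPicard (hv : Continuous (Function.uncurry v)) (hT : 0 ≤ T)
    (hK : ∀ t ∈ Icc 0 T, LipschitzWith K (v t)) (x₀ : E) :
    ContractingWith (K * (K + 1)⁻¹) (weightedPicard hv (K + 1) hT x₀) := by
  refine ⟨by rw [← div_eq_mul_inv, div_lt_one (by positivity)]; exact lt_add_one K,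
    LipschitzWith.of_dist_le_mul fun u w => ?_⟩
  rw [ContinuousMap.dist_le (by positivity)]
  intro t
  have hint (u) : IntervalIntegrable (weightedVelocity v (K + 1) hT u) volume 0 t :=
    (continuous_weightedVelocity hv (K + 1) hT u).intervalIntegrable _ _
  have hint_dist : dist (∫ s in (0 : ℝ)..t, weightedVelocity v (K + 1) hT u s)
      (∫ s in (0 : ℝ)..t, weightedVelocity v (K + 1) hT w s)
      ≤ K * dist u w * ∫ s in (0 : ℝ)..t, Real.exp ((K + 1) * s) := by
    rw [dist_eq_norm, ← intervalIntegral.integral_sub (hint u) (hint w),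
      ← intervalIntegral.integral_const_mul]
    refine intervalIntegral.norm_integral_le_of_norm_le t.2.1 (.of_forall fun s hs => ?_)
      (Continuous.intervalIntegrable (by fun_prop) _ _)
    rw [← dist_eq_norm]
    exact dist_weightedVelocity_le (hK s ⟨hs.1.le, hs.2.trans t.2.2⟩) (K + 1) hT u w
  calc dist (weightedPicard hv (K + 1) hT x₀ u t) (weightedPicard hv (K + 1) hT x₀ w t)
      = Real.exp (-((K + 1) * t)) * dist (∫ s in (0 : ℝ)..t, weightedVelocity v (K + 1) hT u s)
          (∫ s in (0 : ℝ)..t, weightedVelocity v (K + 1) hT w s) := by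
        simp only [weightedPicard, ContinuousMap.coe_mk, dist_smul₀, dist_add_left,
          Real.norm_of_nonneg (Real.exp_pos _).le]
    _ ≤ K * dist u w * (Real.exp (-((K + 1) * t)) * ∫ s in (0 : ℝ)..t, Real.exp ((K + 1) * s)) := by
        rw [mul_left_comm]; gcongr
    _ ≤ K * dist u w * (K + 1 : ℝ)⁻¹ := by
        gcongr; exact exp_neg_mul_integral_exp_le (by positivity)
    _ = _ := by push_cast; ring

theorem exists_forall_hasDerivAt_of_lipschitzWith [CompleteSpace E]
    (hv : Continuous (Function.uncurry v)) (hT : 0 ≤ T)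
    (hK : ∀ t ∈ Icc 0 T, LipschitzWith K (v t)) (x₀ : E) :
    ∃ α : ℝ → E, α 0 = x₀ ∧ ∀ t ∈ Icc 0 T, HasDerivAt α (v t (α t)) t := by
  have hcontr := contractingWith_weightedPicard hv hT hK x₀
  set u := ContractingWith.fixedPoint _ hcontr
  have hu : weightedPicard hv (K + 1) hT x₀ u = u := hcontr.fixedPoint_isFixedPt
  refine ⟨fun t => x₀ + ∫ s in (0 : ℝ)..t, weightedVelocity v (K + 1) hT u s, by simp,
    fun t ht => ?_⟩
  have hut : Real.exp (-((K + 1) * t)) •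
      (x₀ + ∫ s in (0 : ℝ)..t, weightedVelocity v (K + 1) hT u s) = u ⟨t, ht⟩ :=
    DFunLike.congr_fun hu ⟨t, ht⟩
  have hderiv :=
    ((continuous_weightedVelocity hv (K + 1) hT u).integral_hasStrictDerivAt 0 t).hasDerivAt
  refine (hderiv.const_add x₀).congr_deriv ?_
  rw [weightedVelocity, projIcc_of_mem hT ht, ← hut, smul_smul, ← Real.exp_add, add_neg_cancel,
    Real.exp_zero, one_smul]

end LipschitzODE

section LinearODE

variable {ι E F : Type*} [NormedAddCommGroup E] [NormedSpace ℝ E] [NormedAddCommGroup F]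
  [NormedSpace ℝ F]

theorem tendstoUniformlyOn_of_hasDerivAt_comp {l : Filter ι} {T : ℝ} {A : ι → ℝ → E →L[ℝ] E}
    {A₀ : ℝ → E →L[ℝ] E} {R : ι → ℝ → F →L[ℝ] E} {R₀ : ℝ → F →L[ℝ] E}
    (hR : ∀ i, ∀ t ∈ Icc 0 T, HasDerivAt (R i) ((A i t).comp (R i t)) t)
    (hR₀ : ∀ t ∈ Icc 0 T, HasDerivAt R₀ ((A₀ t).comp (R₀ t)) t)
    (h0 : Tendsto (fun i => R i 0) l (nhds (R₀ 0))) (hA₀ : ContinuousOn A₀ (Icc 0 T))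
    (hA : TendstoUniformlyOn A A₀ l (Icc 0 T)) : TendstoUniformlyOn R R₀ l (Icc 0 T) := by
  obtain ⟨M, hM⟩ := isCompact_Icc.exists_bound_of_continuousOn hA₀
  obtain ⟨N, hN⟩ := isCompact_Icc.exists_bound_of_continuousOn
    (fun t ht => (hR₀ t ht).continuousAt.continuousWithinAt : ContinuousOn R₀ (Icc 0 T))
  refine tendstoUniformlyOn_of_norm_deriv_sub_le (K := max M 0 + 1) (by positivity) one_pos
    hR hR₀ h0 fun e he => ?_
  have hδ : 0 < min 1 (e / (max N 0 + 1)) := by positivity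
  filter_upwards [Metric.tendstoUniformlyOn_iff.1 hA _ hδ] with i hi t ht _
  have hAi : ‖A i t - A₀ t‖ ≤ min 1 (e / (max N 0 + 1)) := by
    rw [← dist_eq_norm']
    exact (hi t ht).le
  have hA_norm : ‖A i t‖ ≤ max M 0 + 1 := by
    linarith [norm_sub_norm_le (A i t) (A₀ t), hM t ht, le_max_left M 0,
      hAi.trans (min_le_left _ _)]
  have hN_norm : ‖R₀ t‖ ≤ max N 0 + 1 := by linarith [hN t ht, le_max_left N 0]
  calc ‖(A i t).comp (R i t) - (A₀ t).comp (R₀ t)‖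
      = ‖(A i t).comp (R i t - R₀ t) + (A i t - A₀ t).comp (R₀ t)‖ := by
        rw [ContinuousLinearMap.comp_sub, ContinuousLinearMap.sub_comp, sub_add_sub_cancel]
    _ ≤ ‖A i t‖ * ‖R i t - R₀ t‖ + ‖A i t - A₀ t‖ * ‖R₀ t‖ :=
        norm_add_le_of_le (ContinuousLinearMap.opNorm_comp_le _ _)
          (ContinuousLinearMap.opNorm_comp_le _ _)
    _ ≤ (max M 0 + 1) * ‖R i t - R₀ t‖ + e / (max N 0 + 1) * (max N 0 + 1) := by
        gcongr
        exact hAi.trans (min_le_right _ _)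
    _ = (max M 0 + 1) * ‖R i t - R₀ t‖ + e := by rw [div_mul_cancel₀ e (by positivity)]

end LinearODE

section NearCompact

variable {P E F : Type*} [PseudoMetricSpace P]

theorem exists_forall_dist_lt_of_isCompact [PseudoMetricSpace E] [PseudoMetricSpace F]
    {g : P → E → F} (hg : Continuous (Function.uncurry g)) {C : Set E} (hC : IsCompact C) (p₀ : P)
    {e : ℝ} (he : 0 < e) :
    ∃ δ > 0, ∀ p, dist p p₀ < δ → ∀ a ∈ C, ∀ b, dist b a < δ → dist (g p b) (g p₀ a) < e := by
  obtain ⟨δ, hδ, hunif⟩ := Metric.mem_uniformity_dist.1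
    ((isCompact_singleton (x := p₀).prod hC).uniformContinuousAt_of_continuousAt _
      (fun _ _ => hg.continuousAt) (Metric.dist_mem_uniformity he))
  refine ⟨δ, hδ, fun p hp a ha b hb => ?_⟩
  rw [dist_comm]
  refine hunif (a := (p₀, a)) (b := (p, b)) ?_ ⟨rfl, ha⟩
  rw [dist_comm]
  exact max_lt hp hb

variable [NormedAddCommGroup E] [NormedSpace ℝ E] [NormedAddCommGroup F] [NormedSpace ℝ F]

theorem exists_forall_norm_sub_sub_fderiv_le {X : P → E → F} (hX : ∀ p, Differentiable ℝ (X p))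
    (hDX : Continuous (Function.uncurry fun p => fderiv ℝ (X p))) {C : Set E} (hC : IsCompact C)
    (p₀ : P) {e : ℝ} (he : 0 < e) :
    ∃ δ > 0, ∀ p, dist p p₀ < δ → ∀ a ∈ C, ∀ b, dist b a < δ →
      ‖X p b - X p a - fderiv ℝ (X p₀) a (b - a)‖ ≤ e * ‖b - a‖ := by
  obtain ⟨δ, hδ, hclose⟩ := exists_forall_dist_lt_of_isCompact hDX hC p₀ he
  refine ⟨δ, hδ, fun p hp a ha b hb => ?_⟩
  refine (convex_ball a δ).norm_image_sub_le_of_norm_fderiv_le' (𝕜 := ℝ)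
    (fun z _ => hX p z) (fun z hz => ?_) (mem_ball_self hδ) hb
  rw [← dist_eq_norm]
  exact (hclose p hp a ha z hz).le

theorem norm_smul_sub_sub_le {D : E →L[ℝ] F} {a b w : E} {y : F} {ρ e M N : ℝ} (hρ : 0 < ρ)
    (he : 0 ≤ e) (hD : ‖D‖ ≤ M) (hy : ‖y - D (b - a)‖ ≤ e * ‖b - a‖) (hab : ‖b - a‖ ≤ ρ * N) :
    ‖ρ⁻¹ • (y - D w)‖ ≤ M * ‖ρ⁻¹ • (b - a - w)‖ + e * N := by
  have hsplit : ρ⁻¹ • (y - D w) = D (ρ⁻¹ • (b - a - w)) + ρ⁻¹ • (y - D (b - a)) := by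
    rw [map_smul, ← smul_add, map_sub]
    congr 1
    abel
  rw [hsplit]
  refine (norm_add_le _ _).trans (add_le_add (D.le_of_opNorm_le hD _) ?_)
  calc ‖ρ⁻¹ • (y - D (b - a))‖ = ρ⁻¹ * ‖y - D (b - a)‖ := by
        rw [norm_smul, Real.norm_of_nonneg (by positivity)]
    _ ≤ ρ⁻¹ * (e * (ρ * N)) := by gcongr; exact hy.trans (by gcongr)
    _ = e * N := by field_simp

theorem eventually_norm_smul_sub_sub_fderiv_le {X : E → F} (hX : ContDiff ℝ 1 X) {C : Set E}
    (hC : IsCompact C) {M N e : ℝ} (hM : ∀ a ∈ C, ‖fderiv ℝ X a‖ ≤ M) (hN : 0 ≤ N) (he : 0 < e) :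
    ∀ᶠ ρ in nhdsWithin (0 : ℝ) (Ici 0), ∀ a ∈ C, ∀ b w, ‖w‖ ≤ N * ρ → ‖ρ⁻¹ • (b - a - w)‖ ≤ 1 →
      ‖ρ⁻¹ • (X b - X a - fderiv ℝ X a w)‖ ≤ M * ‖ρ⁻¹ • (b - a - w)‖ + e := by
  obtain ⟨δ, hδ, hlin⟩ := exists_forall_norm_sub_sub_fderiv_le (P := Unit) (X := fun _ => X)
    (fun _ => hX.differentiable one_ne_zero)
    ((hX.continuous_fderiv one_ne_zero).comp continuous_snd) hC ()
    (show 0 < e / (1 + N) by positivity)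
  have hnear : ∀ᶠ ρ : ℝ in nhdsWithin 0 (Ici 0), ρ * (1 + N) < δ :=
    ((Continuous.tendsto' (by fun_prop) 0 0 (zero_mul (1 + N))).eventually_lt_const
      hδ.lt).filter_mono nhdsWithin_le_nhds
  filter_upwards [hnear, self_mem_nhdsWithin] with ρ hρδ (hρ : 0 ≤ ρ) a ha b w hw herr
  rcases hρ.eq_or_lt with rfl | hρ
  · simp [he.le]
  have hab : ‖b - a‖ ≤ ρ * (1 + N) := by
    rw [norm_smul, norm_inv, Real.norm_of_nonneg hρ.le, inv_mul_le_iff₀ hρ] at herr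
    linarith [norm_sub_norm_le (b - a) w]
  have hab_lin := hlin () (by rwa [dist_self]) a ha b (by rw [dist_eq_norm]; linarith)
  refine (norm_smul_sub_sub_le hρ (by positivity) (hM a ha) hab_lin hab).trans_eq ?_
  rw [div_mul_cancel₀ e (by positivity)]

theorem exists_eventually_norm_sub_le_mul_add {X : P → E → F} (hX : ∀ p, Differentiable ℝ (X p))
    (hXc : Continuous (Function.uncurry X))
    (hDX : Continuous (Function.uncurry fun p => fderiv ℝ (X p))) {C : Set E} (hC : IsCompact C)
    (p₀ : P) :
    ∃ K ≥ 0, ∃ r > 0, ∀ e > 0, ∀ᶠ p in nhds p₀, ∀ a ∈ C, ∀ b, dist b a < r →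
      ‖X p b - X p₀ a‖ ≤ K * ‖b - a‖ + e := by
  have hDX₀ : Continuous (fderiv ℝ (X p₀)) := hDX.comp (Continuous.prodMk_right p₀)
  obtain ⟨M, hM⟩ := hC.exists_bound_of_continuousOn hDX₀.continuousOn
  obtain ⟨r, hr, hlin⟩ := exists_forall_norm_sub_sub_fderiv_le hX hDX hC p₀ one_pos
  refine ⟨1 + max M 0, by positivity, r, hr, fun e he => ?_⟩
  obtain ⟨ρ, hρ, hclose⟩ := exists_forall_dist_lt_of_isCompact hXc hC p₀ he
  filter_upwards [ball_mem_nhds p₀ (lt_min hr hρ)] with p hp a ha b hab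
  have hlin_ab := hlin p (hp.trans_le (min_le_left _ _)) a ha b hab
  have hDX_ab : ‖fderiv ℝ (X p₀) a (b - a)‖ ≤ max M 0 * ‖b - a‖ :=
    ContinuousLinearMap.le_of_opNorm_le _ ((hM a ha).trans (le_max_left _ _)) _
  have hclose_a := hclose p (hp.trans_le (min_le_right _ _)) a ha a (by rwa [dist_self])
  rw [dist_eq_norm] at hclose_a
  calc ‖X p b - X p₀ a‖
      = ‖(X p b - X p a - fderiv ℝ (X p₀) a (b - a)) + fderiv ℝ (X p₀) a (b - a)
          + (X p a - X p₀ a)‖ := by congr 1; abel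
    _ ≤ 1 * ‖b - a‖ + max M 0 * ‖b - a‖ + e :=
        norm_add₃_le.trans (add_le_add_three hlin_ab hDX_ab hclose_a.le)
    _ = (1 + max M 0) * ‖b - a‖ + e := by ring

end NearCompact

section Flow

variable {E : Type*} [NormedAddCommGroup E] [NormedSpace ℝ E]

/-- `φ` is the complete flow of the autonomous vector field `X`. -/
structure IsCompleteFlow (X : E → E) (φ : ℝ → E → E) : Prop where
  map_zero : ∀ x, φ 0 x = x
  map_add : ∀ s t x, φ s (φ t x) = φ (s + t) x
  hasDerivAt : ∀ x t, HasDerivAt (fun τ => φ τ x) (X (φ t x)) t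

namespace IsCompleteFlow

section SingleFlow

variable {X : E → E} {φ : ℝ → E → E}

theorem continuous_orbit (hφ : IsCompleteFlow X φ) (x : E) : Continuous fun t => φ t x :=
  continuous_iff_continuousAt.2 fun t => (hφ.hasDerivAt x t).continuousAt

theorem isCompact_orbit (hφ : IsCompleteFlow X φ) (x : E) (T : ℝ) :
    IsCompact ((fun t => φ t x) '' Icc 0 T) :=
  isCompact_Icc.image (hφ.continuous_orbit x)

theorem map_neg_map (hφ : IsCompleteFlow X φ) (t : ℝ) (x : E) : φ (-t) (φ t x) = x := by
  rw [hφ.map_add, neg_add_cancel, hφ.map_zero]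

theorem fderiv_zero (hφ : IsCompleteFlow X φ) (x : E) :
    fderiv ℝ (φ 0) x = ContinuousLinearMap.id ℝ E := by
  rw [funext hφ.map_zero, fderiv_fun_id]

theorem reverse (hφ : IsCompleteFlow X φ) : IsCompleteFlow (-X) fun t => φ (-t) where
  map_zero x := by rw [neg_zero, hφ.map_zero]
  map_add s t x := by rw [hφ.map_add, neg_add]
  hasDerivAt x t := by
    simpa [Function.comp_def] using (hφ.hasDerivAt x (-t)).scomp t (hasDerivAt_neg t)

end SingleFlow

section Family

variable {P : Type*} [PseudoMetricSpace P] {X : P → E → E} {φ : P → ℝ → E → E}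

theorem tendstoUniformlyOn (hφ : ∀ p, IsCompleteFlow (X p) (φ p)) (hX : ∀ p, Differentiable ℝ (X p))
    (hXc : Continuous (Function.uncurry X))
    (hDX : Continuous (Function.uncurry fun p => fderiv ℝ (X p))) (q₀ : P × E) (T : ℝ) :
    TendstoUniformlyOn (fun (q : P × E) t => φ q.1 t q.2) (fun t => φ q₀.1 t q₀.2) (nhds q₀)
      (Icc 0 T) := by
  obtain ⟨p₀, x₀⟩ := q₀
  obtain ⟨K, hK, r, hr, hXle⟩ :=
    exists_eventually_norm_sub_le_mul_add hX hXc hDX ((hφ p₀).isCompact_orbit x₀ T) p₀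
  refine tendstoUniformlyOn_of_norm_deriv_sub_le hK (half_pos hr)
    (fun q t _ => (hφ q.1).hasDerivAt q.2 t) (fun t _ => (hφ p₀).hasDerivAt x₀ t) ?_ fun e he => ?_
  · simp only [(hφ _).map_zero]
    exact continuous_snd.tendsto (p₀, x₀)
  · filter_upwards [continuous_fst.continuousAt.eventually (hXle e he)] with q hq t ht hdist
    refine hq _ ⟨t, ht, rfl⟩ _ ?_
    rw [dist_eq_norm]
    linarith

end Family

section Differentiability

variable {X : E → E} {φ : ℝ → E → E}

/- Gronwall's inequality applied to the rescaled error `‖z - x‖⁻¹ (φ t z - φ t x - R t (z - x))`. -/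
theorem hasFDerivAt_of_linearization (hφ : IsCompleteFlow X φ) (hX : ContDiff ℝ 1 X) {x : E} {T : ℝ}
    {R : ℝ → E →L[ℝ] E} (hR0 : R 0 = ContinuousLinearMap.id ℝ E)
    (hR : ∀ t ∈ Icc 0 T, HasDerivAt R ((fderiv ℝ X (φ t x)).comp (R t)) t) {t : ℝ}
    (ht : t ∈ Icc 0 T) : HasFDerivAt (φ t) (R t) x := by
  have hDX : Continuous (fderiv ℝ X) := hX.continuous_fderiv one_ne_zero
  have hC := hφ.isCompact_orbit x T
  obtain ⟨M, hM⟩ := hC.exists_bound_of_continuousOn hDX.continuousOn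
  have hM0 : 0 ≤ M := (norm_nonneg _).trans (hM _ ⟨t, ht, rfl⟩)
  obtain ⟨N, hN⟩ := isCompact_Icc.exists_bound_of_continuousOn
    (fun t ht => (hR t ht).continuousAt.continuousWithinAt : ContinuousOn R (Icc 0 T))
  have hRz (z : E) : ∀ t ∈ Icc 0 T,
      HasDerivAt (fun t => R t (z - x)) (fderiv ℝ X (φ t x) (R t (z - x))) t := fun t ht => by
    simpa using (hR t ht).clm_apply (hasDerivAt_const t (z - x))
  have herr : TendstoUniformlyOn (fun z t => ‖z - x‖⁻¹ • (φ t z - φ t x - R t (z - x))) 0 (nhds x)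
      (Icc 0 T) := by
    refine tendstoUniformlyOn_of_norm_deriv_sub_le hM0 one_pos
      (fun z t ht => (((hφ.hasDerivAt z t).sub (hφ.hasDerivAt x t)).sub
        (hRz z t ht)).const_smul ‖z - x‖⁻¹)
      (fun t _ => hasDerivAt_const t (0 : E)) ?_ fun e he => ?_
    · simp [hφ.map_zero, hR0]
    · have hN0 : 0 ≤ N := (norm_nonneg _).trans (hN t ht)
      have hz0 : Tendsto (fun z => ‖z - x‖) (nhds x) (nhdsWithin 0 (Ici 0)) :=
        tendsto_nhdsWithin_iff.2 ⟨Continuous.tendsto' (by fun_prop) _ _ (by simp),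
          .of_forall fun z => norm_nonneg _⟩
      filter_upwards [hz0.eventually
        (eventually_norm_smul_sub_sub_fderiv_le hX hC hM hN0 he)] with z hz s hs hdist
      simp only [Pi.zero_apply, sub_zero] at hdist ⊢
      exact hz (φ s x) ⟨s, hs, rfl⟩ (φ s z) (R s (z - x)) ((R s).le_of_opNorm_le (hN s hs) _) hdist
  refine hasFDerivAt_iff_tendsto.2 ?_
  simpa [norm_smul] using (herr.tendsto_at ht).norm

variable [CompleteSpace E]

theorem exists_linearization (hφ : IsCompleteFlow X φ) (hX : ContDiff ℝ 1 X) (x : E) {T : ℝ}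
    (hT : 0 ≤ T) :
    ∃ R : ℝ → E →L[ℝ] E, R 0 = ContinuousLinearMap.id ℝ E ∧
      ∀ t ∈ Icc 0 T, HasDerivAt R ((fderiv ℝ X (φ t x)).comp (R t)) t := by
  have hA : Continuous fun t => fderiv ℝ X (φ t x) :=
    (hX.continuous_fderiv one_ne_zero).comp (hφ.continuous_orbit x)
  obtain ⟨M, hM⟩ := isCompact_Icc.exists_bound_of_continuousOn (hA.continuousOn (s := Icc 0 T))
  refine exists_forall_hasDerivAt_of_lipschitzWith (K := M.toNNReal)
    (v := fun t (R : E →L[ℝ] E) => (fderiv ℝ X (φ t x)).comp R)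
    ((hA.comp continuous_fst).clm_comp continuous_snd) hT (fun t ht => ?_) _
  refine LipschitzWith.of_dist_le_mul fun R S => ?_
  rw [dist_eq_norm, dist_eq_norm, ← ContinuousLinearMap.comp_sub]
  refine (ContinuousLinearMap.opNorm_comp_le _ _).trans ?_
  gcongr
  exact (hM t ht).trans (Real.le_coe_toNNReal M)

theorem differentiable (hφ : IsCompleteFlow X φ) (hX : ContDiff ℝ 1 X) (t : ℝ) :
    Differentiable ℝ (φ t) := by
  intro x
  rcases le_total 0 t with ht | ht
  · obtain ⟨R, hR0, hR⟩ := hφ.exists_linearization hX x ht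
    exact (hφ.hasFDerivAt_of_linearization hX hR0 hR ⟨ht, le_rfl⟩).differentiableAt
  · have ht' : 0 ≤ -t := neg_nonneg.2 ht
    obtain ⟨R, hR0, hR⟩ := hφ.reverse.exists_linearization hX.neg x ht'
    simpa using
      (hφ.reverse.hasFDerivAt_of_linearization hX.neg hR0 hR ⟨ht', le_rfl⟩).differentiableAt

theorem fderiv_add (hφ : IsCompleteFlow X φ) (hX : ContDiff ℝ 1 X) (s t : ℝ) (x : E) :
    fderiv ℝ (φ (s + t)) x = (fderiv ℝ (φ s) (φ t x)).comp (fderiv ℝ (φ t) x) := by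
  rw [← fderiv_comp x (hφ.differentiable hX s _) (hφ.differentiable hX t x)]
  congr 1
  exact funext fun z => (hφ.map_add s t z).symm

theorem leftInverse_fderiv (hφ : IsCompleteFlow X φ) (hX : ContDiff ℝ 1 X) (t : ℝ) (x : E) :
    Function.LeftInverse (fderiv ℝ (φ (-t)) (φ t x)) (fderiv ℝ (φ t) x) := by
  refine DFunLike.congr_fun (f := (fderiv ℝ (φ (-t)) (φ t x)).comp (fderiv ℝ (φ t) x))
    (g := ContinuousLinearMap.id ℝ E) ?_
  rw [← hφ.fderiv_add hX, neg_add_cancel, hφ.fderiv_zero]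

theorem rightInverse_fderiv (hφ : IsCompleteFlow X φ) (hX : ContDiff ℝ 1 X) (t : ℝ) (x : E) :
    Function.RightInverse (fderiv ℝ (φ (-t)) (φ t x)) (fderiv ℝ (φ t) x) := by
  have hleft := hφ.leftInverse_fderiv hX (-t) (φ t x)
  rwa [neg_neg, hφ.map_neg_map] at hleft

theorem hasDerivAt_fderiv_of_pos (hφ : IsCompleteFlow X φ) (hX : ContDiff ℝ 1 X) (x : E) {t : ℝ}
    (ht : 0 < t) :
    HasDerivAt (fun τ => fderiv ℝ (φ τ) x)
      ((fderiv ℝ X (φ t x)).comp (fderiv ℝ (φ t) x)) t := by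
  obtain ⟨R, hR0, hR⟩ := hφ.exists_linearization hX x (add_pos ht one_pos).le
  have hfderiv {τ : ℝ} (hτ : τ ∈ Icc 0 (t + 1)) : fderiv ℝ (φ τ) x = R τ :=
    (hφ.hasFDerivAt_of_linearization hX hR0 hR hτ).fderiv
  have htmem : t ∈ Icc 0 (t + 1) := ⟨ht.le, by linarith⟩
  rw [hfderiv htmem]
  refine (hR t htmem).congr_of_eventuallyEq ?_
  filter_upwards [Icc_mem_nhds ht (lt_add_one t)] with τ hτ using hfderiv hτ

theorem hasDerivAt_fderiv (hφ : IsCompleteFlow X φ) (hX : ContDiff ℝ 1 X) (x : E) (t : ℝ) :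
    HasDerivAt (fun τ => fderiv ℝ (φ τ) x)
      ((fderiv ℝ X (φ t x)).comp (fderiv ℝ (φ t) x)) t := by
  set T := |t| + 1
  have hpos : 0 < t + T := by linarith [neg_abs_le t]
  have hshift (τ : ℝ) : fderiv ℝ (φ τ) x
      = (fderiv ℝ (φ (τ + T)) (φ (-T) x)).comp (fderiv ℝ (φ (-T)) x) := by
    rw [← hφ.fderiv_add hX, add_neg_cancel_right]
  have hderiv := ((hφ.hasDerivAt_fderiv_of_pos hX (φ (-T) x) hpos).comp_add_const t T).clm_comp
    (hasDerivAt_const t (fderiv ℝ (φ (-T)) x))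
  rw [funext hshift]
  refine hderiv.congr_deriv ?_
  rw [hshift t, hφ.map_add, add_neg_cancel_right, ContinuousLinearMap.comp_zero, add_zero,
    ContinuousLinearMap.comp_assoc]

end Differentiability

section Family

variable [CompleteSpace E] {P : Type*} [PseudoMetricSpace P] {X : P → E → E} {φ : P → ℝ → E → E}

theorem continuous_fderiv_flow (hφ : ∀ p, IsCompleteFlow (X p) (φ p))
    (hX : ∀ p, ContDiff ℝ 1 (X p)) (hXc : Continuous (Function.uncurry X))
    (hDX : Continuous (Function.uncurry fun p => fderiv ℝ (X p))) {T : ℝ} (hT : 0 ≤ T) :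
    Continuous fun q : P × E => fderiv ℝ (φ q.1 T) q.2 := by
  refine continuous_iff_continuousAt.2 fun q₀ => ?_
  let A (q : P × E) (t : ℝ) : E →L[ℝ] E := fderiv ℝ (X q.1) (φ q.1 t q.2)
  let R (q : P × E) (t : ℝ) : E →L[ℝ] E := fderiv ℝ (φ q.1 t) q.2
  have hR (q : P × E) (t : ℝ) : HasDerivAt (R q) ((A q t).comp (R q t)) t :=
    (hφ q.1).hasDerivAt_fderiv (hX q.1) q.2 t
  have hA : TendstoUniformlyOn A (A q₀) (nhds q₀) (Icc 0 T) := by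
    refine Metric.tendstoUniformlyOn_iff.2 fun e he => ?_
    obtain ⟨δ, hδ, hclose⟩ := exists_forall_dist_lt_of_isCompact hDX
      ((hφ q₀.1).isCompact_orbit q₀.2 T) q₀.1 he
    filter_upwards [continuous_fst.continuousAt.eventually (ball_mem_nhds q₀.1 hδ),
      Metric.tendstoUniformlyOn_iff.1 (tendstoUniformlyOn hφ
        (fun p => (hX p).differentiable one_ne_zero) hXc hDX q₀ T) δ hδ] with q hq hqt t ht
    rw [dist_comm]
    exact hclose q.1 hq _ ⟨t, ht, rfl⟩ _ (by rw [dist_comm]; exact hqt t ht)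
  have hA₀ : Continuous (A q₀) :=
    (hDX.comp (Continuous.prodMk_right q₀.1)).comp ((hφ q₀.1).continuous_orbit q₀.2)
  exact (tendstoUniformlyOn_of_hasDerivAt_comp (fun q t _ => hR q t) (fun t _ => hR q₀ t)
    (by simp only [R, (hφ _).fderiv_zero, tendsto_const_nhds]) hA₀.continuousOn hA).tendsto_at
    ⟨hT, le_rfl⟩

end Family

end IsCompleteFlow
end Flow

section IteratedFDeriv

variable {A E F : Type*} [TopologicalSpace A] [NormedAddCommGroup E] [NormedSpace ℝ E]
  [NormedAddCommGroup F] [NormedSpace ℝ F]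

theorem continuous_iteratedFDeriv_zero_iff {f : A → E → F} {g : A → E} :
    Continuous (fun a => iteratedFDeriv ℝ 0 (f a) (g a)) ↔ Continuous fun a => f a (g a) := by
  simp only [iteratedFDeriv_zero_eq_comp]
  exact (continuousMultilinearCurryFin0 ℝ E F).symm.comp_continuous_iff

theorem continuous_iteratedFDeriv_succ_iff {f : A → E → F} {g : A → E} {n : ℕ} :
    Continuous (fun a => iteratedFDeriv ℝ (n + 1) (f a) (g a)) ↔
      Continuous fun a => iteratedFDeriv ℝ n (fderiv ℝ (f a)) (g a) := by
  simp only [iteratedFDeriv_succ_eq_comp_right]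
  exact (continuousMultilinearCurryRightEquiv' ℝ n E F).symm.comp_continuous_iff

theorem iteratedFDeriv_prodMk_right {G : Type*} [NormedAddCommGroup G] [NormedSpace ℝ G]
    {f : E × F → G} {n : ℕ} (hf : ContDiff ℝ n f) (x : E) (y : F) (m : Fin n → F) :
    iteratedFDeriv ℝ n (fun y => f (x, y)) y m = iteratedFDeriv ℝ n f (x, y) fun i => (0, m i) := by
  have hslice : (fun y => f (x, y))
      = (fun z => f ((x, 0) + z)) ∘ ContinuousLinearMap.inr ℝ E F := by ext; simp
  have hshift : ContDiff ℝ n fun z => f ((x, 0) + z) := hf.comp (contDiff_const.add contDiff_id)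
  rw [hslice, ContinuousLinearMap.iteratedFDeriv_comp_right _ hshift y le_rfl,
    iteratedFDeriv_comp_add_left]
  simp

end IteratedFDeriv

section JointContinuity

variable {d : ℕ} {C : Type*} [MetricSpace C] {Hfam : C → Phase d → ℝ}

namespace C2CompactOpenCont

theorem continuous_iteratedFDeriv (hcont : C2CompactOpenCont Hfam)
    (hsm : ∀ c, ContDiff ℝ 2 (Hfam c)) {j : ℕ} (hj : j ≤ 2) :
    Continuous fun q : C × Phase d => iteratedFDeriv ℝ j (Hfam q.1) q.2 := by
  refine continuous_iff_continuousAt.2 fun ⟨c₀, x₀⟩ => ?_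
  refine tendsto_comp_of_locally_uniform_limit (F := fun q : C × Phase d =>
    iteratedFDeriv ℝ j (Hfam q.1)) (g := Prod.snd)
    ((hsm c₀).continuous_iteratedFDeriv (mod_cast hj)).continuousAt continuous_snd.continuousAt
    fun u hu => ⟨closedBall x₀ 1, closedBall_mem_nhds x₀ one_pos, ?_⟩
  obtain ⟨ε, hε, hεu⟩ := Metric.mem_uniformity_dist.1 hu
  obtain ⟨δ, hδ, hclose⟩ := hcont c₀ _ (isCompact_closedBall x₀ 1) (ε / 2) (half_pos hε)
  filter_upwards [continuous_fst.continuousAt.eventually (ball_mem_nhds c₀ hδ)] with q hq y hy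
  refine hεu ?_
  rw [dist_eq_norm']
  exact (hclose q.1 hq j hj y hy).trans_lt (half_lt_self hε)

theorem continuous_fderiv (hcont : C2CompactOpenCont Hfam) (hsm : ∀ c, ContDiff ℝ 2 (Hfam c)) :
    Continuous fun q : C × Phase d => fderiv ℝ (Hfam q.1) q.2 :=
  continuous_iteratedFDeriv_zero_iff.1 <| continuous_iteratedFDeriv_succ_iff.1 <|
    hcont.continuous_iteratedFDeriv hsm one_le_two

theorem continuous_fderiv_fderiv (hcont : C2CompactOpenCont Hfam)
    (hsm : ∀ c, ContDiff ℝ 2 (Hfam c)) :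
    Continuous fun q : C × Phase d => fderiv ℝ (fderiv ℝ (Hfam q.1)) q.2 :=
  continuous_iteratedFDeriv_zero_iff.1 <| continuous_iteratedFDeriv_succ_iff.1 <|
    continuous_iteratedFDeriv_succ_iff.1 <| hcont.continuous_iteratedFDeriv hsm le_rfl

end C2CompactOpenCont

end JointContinuity

section SymplecticForm

variable {d : ℕ}

/-- The canonical symplectic form `dq ∧ dp` of `T*ℝᵈ`. -/
def sympForm (ξ ζ : Phase d) : ℝ := ⟪ξ.1, ζ.2⟫ - ⟪ξ.2, ζ.1⟫

theorem sympForm_swap (ξ ζ : Phase d) : sympForm ξ ζ = -sympForm ζ ξ := by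
  simp only [sympForm, real_inner_comm, neg_sub]

theorem hasDerivAt_sympForm {ξ ζ : ℝ → Phase d} {ξ' ζ' : Phase d} {t : ℝ}
    (hξ : HasDerivAt ξ ξ' t) (hζ : HasDerivAt ζ ζ' t) :
    HasDerivAt (fun t => sympForm (ξ t) (ζ t)) (sympForm ξ' (ζ t) + sympForm (ξ t) ζ') t := by
  have hfst : ∀ {η : ℝ → Phase d} {η'}, HasDerivAt η η' t → HasDerivAt (fun t => (η t).1) η'.1 t :=
    fun hη => (ContinuousLinearMap.fst ℝ (Euc d) (Euc d)).hasFDerivAt.comp_hasDerivAt t hη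
  have hsnd : ∀ {η : ℝ → Phase d} {η'}, HasDerivAt η η' t → HasDerivAt (fun t => (η t).2) η'.2 t :=
    fun hη => (ContinuousLinearMap.snd ℝ (Euc d) (Euc d)).hasFDerivAt.comp_hasDerivAt t hη
  refine (((hfst hξ).inner ℝ (hsnd hζ)).sub ((hsnd hξ).inner ℝ (hfst hζ))).congr_deriv ?_
  simp only [sympForm]
  ring

end SymplecticForm

section HamiltonianField

variable {d : ℕ} {H : Phase d → ℝ} {lam : ℝ}

/-- The Riesz isomorphism from linear forms to vectors. It differs from
`(InnerProductSpace.toDual ℝ F).symm` in being linear instead of conjugate-linear over `ℝ`. -/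
def rieszVector (F : Type*) [NormedAddCommGroup F] [InnerProductSpace ℝ F] [CompleteSpace F] :
    (F →L[ℝ] ℝ) →L[ℝ] F where
  toFun := (InnerProductSpace.toDual ℝ F).symm
  map_add' := map_add _
  map_smul' r l := by simp
  cont := (InnerProductSpace.toDual ℝ F).symm.continuous

theorem inner_rieszVector {F : Type*} [NormedAddCommGroup F] [InnerProductSpace ℝ F]
    [CompleteSpace F] (l : F →L[ℝ] ℝ) (v : F) : ⟪rieszVector F l, v⟫ = l v :=
  InnerProductSpace.toDual_symm_apply

/-- The symplectic gradient `(∂l/∂p, -∂l/∂q)` of a linear form `l` on phase space. -/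
def sympGrad (d : ℕ) : (Phase d →L[ℝ] ℝ) →L[ℝ] Phase d :=
  ((rieszVector (Euc d)).comp
      (ContinuousLinearMap.precomp ℝ (ContinuousLinearMap.inr ℝ (Euc d) (Euc d)))).prod
    (-(rieszVector (Euc d)).comp
      (ContinuousLinearMap.precomp ℝ (ContinuousLinearMap.inl ℝ (Euc d) (Euc d))))

theorem sympForm_sympGrad (l : Phase d →L[ℝ] ℝ) (ζ : Phase d) :
    sympForm (sympGrad d l) ζ = l ζ := by
  have hfst : ⟪(sympGrad d l).1, ζ.2⟫ = l (0, ζ.2) := inner_rieszVector _ _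
  have hsnd : ⟪(sympGrad d l).2, ζ.1⟫ = -l (ζ.1, 0) := by
    refine (inner_neg_left _ _).trans (congrArg Neg.neg (inner_rieszVector _ _))
  rw [sympForm, hfst, hsnd, sub_neg_eq_add, ← map_add]
  simp

/-- The projection `(q, p) ↦ (0, p)` of phase space onto the vertical. -/
def vertProj (d : ℕ) : Phase d →L[ℝ] Phase d :=
  (ContinuousLinearMap.inr ℝ (Euc d) (Euc d)).comp (ContinuousLinearMap.snd ℝ (Euc d) (Euc d))

theorem vertProj_apply (x : Phase d) : vertProj d x = (0, x.2) := rfl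

theorem hamVF_eq (hH : Differentiable ℝ H) (lam : ℝ) :
    hamVF H lam = fun x => sympGrad d (fderiv ℝ H x) - lam • vertProj d x := by
  funext ⟨q, p⟩
  have hq : fderiv ℝ (fun q' => H (q', p)) q = (fderiv ℝ H (q, p)).comp (.inl ℝ _ _) :=
    ((hH (q, p)).hasFDerivAt.comp q (hasFDerivAt_prodMk_left q p)).fderiv
  have hp : fderiv ℝ (fun p' => H (q, p')) p = (fderiv ℝ H (q, p)).comp (.inr ℝ _ _) :=
    ((hH (q, p)).hasFDerivAt.comp p (hasFDerivAt_prodMk_right q p)).fderiv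
  simp only [hamVF, gradient, hq, hp]
  ext1
  · simp [vertProj_apply, sympGrad, rieszVector]
  · simp [vertProj_apply, sympGrad, rieszVector]

theorem contDiff_hamVF (hH : ContDiff ℝ 2 H) (lam : ℝ) : ContDiff ℝ 1 (hamVF H lam) := by
  rw [hamVF_eq (hH.differentiable two_ne_zero)]
  exact ((sympGrad d).contDiff.comp (hH.fderiv_right one_add_one_eq_two.le)).sub
    ((vertProj d).contDiff.const_smul lam)

theorem fderiv_hamVF (hH : ContDiff ℝ 2 H) (lam : ℝ) (x : Phase d) :
    fderiv ℝ (hamVF H lam) x =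
      (sympGrad d).comp (fderiv ℝ (fderiv ℝ H) x) - lam • vertProj d := by
  rw [hamVF_eq (hH.differentiable two_ne_zero)]
  have hDH : HasFDerivAt (fderiv ℝ H) (fderiv ℝ (fderiv ℝ H) x) x :=
    (((hH.fderiv_right one_add_one_eq_two.le).differentiable one_ne_zero) x).hasFDerivAt
  exact (((sympGrad d).hasFDerivAt.comp x hDH).sub
    ((vertProj d).hasFDerivAt.const_smul lam)).fderiv

theorem sympForm_fderiv_hamVF_add (hH : ContDiff ℝ 2 H) (lam : ℝ) (x ξ ζ : Phase d) :
    sympForm (fderiv ℝ (hamVF H lam) x ξ) ζ + sympForm ξ (fderiv ℝ (hamVF H lam) x ζ) =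
      -lam * sympForm ξ ζ := by
  have hsymm : fderiv ℝ (fderiv ℝ H) x ξ ζ = fderiv ℝ (fderiv ℝ H) x ζ ξ :=
    (hH.contDiffAt.isSymmSndFDerivAt (by simp)) ξ ζ
  have hleft : ∀ ξ ζ, sympForm (fderiv ℝ (hamVF H lam) x ξ) ζ
      = fderiv ℝ (fderiv ℝ H) x ξ ζ + lam * ⟪ξ.2, ζ.1⟫ := fun ξ ζ => by
    rw [← sympForm_sympGrad (fderiv ℝ (fderiv ℝ H) x ξ) ζ, fderiv_hamVF hH]
    simp only [sympForm, sub_apply, ContinuousLinearMap.comp_apply, smul_apply, vertProj_apply,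
      Prod.smul_mk, smul_zero, Prod.fst_sub, sub_zero, Prod.snd_sub, inner_sub_left,
      real_inner_smul_left]
    ring
  rw [sympForm_swap ξ, hleft, hleft, hsymm]
  simp only [sympForm, real_inner_comm]
  ring

theorem inner_fderiv_hamVF_fst (hH : ContDiff ℝ 2 H) (lam : ℝ) (q p w : Euc d) :
    ⟪(fderiv ℝ (hamVF H lam) (q, p) (0, w)).1, w⟫ =
      iteratedFDeriv ℝ 2 (fun p' => H (q, p')) p ![w, w] := by
  rw [iteratedFDeriv_prodMk_right hH, iteratedFDeriv_two_apply, fderiv_hamVF hH]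
  have := sympForm_sympGrad (fderiv ℝ (fderiv ℝ H) (q, p) (0, w)) (0, w)
  simpa [sympForm, vertProj_apply] using this

theorem ConvexInFiber.iteratedFDeriv_nonneg (hH : ConvexInFiber H) (q p v : Euc d) :
    0 ≤ iteratedFDeriv ℝ 2 (fun p' => H (q, p')) p ![v, v] := by
  obtain rfl | hv := eq_or_ne v 0
  · simp [iteratedFDeriv_two_apply]
  · exact (hH q p v hv).le

variable {C : Type*} [MetricSpace C] {Hfam : C → Phase d → ℝ}

theorem C2CompactOpenCont.continuous_hamVF (hcont : C2CompactOpenCont Hfam)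
    (hsm : ∀ c, ContDiff ℝ 2 (Hfam c)) :
    Continuous (Function.uncurry fun a : C × ℝ => hamVF (Hfam a.1) a.2) := by
  have hDH : Continuous fun b : (C × ℝ) × Phase d => fderiv ℝ (Hfam b.1.1) b.2 :=
    (hcont.continuous_fderiv hsm).comp ((continuous_fst.comp continuous_fst).prodMk continuous_snd)
  simp only [Function.uncurry_def, hamVF_eq ((hsm _).differentiable two_ne_zero)]
  fun_prop

theorem C2CompactOpenCont.continuous_fderiv_hamVF (hcont : C2CompactOpenCont Hfam)
    (hsm : ∀ c, ContDiff ℝ 2 (Hfam c)) :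
    Continuous (Function.uncurry fun a : C × ℝ => fderiv ℝ (hamVF (Hfam a.1) a.2)) := by
  have hDDH : Continuous fun b : (C × ℝ) × Phase d => fderiv ℝ (fderiv ℝ (Hfam b.1.1)) b.2 :=
    (hcont.continuous_fderiv_fderiv hsm).comp
      ((continuous_fst.comp continuous_fst).prodMk continuous_snd)
  simp only [Function.uncurry_def, fderiv_hamVF (hsm _)]
  fun_prop

end HamiltonianField

section Height

variable {d : ℕ}

theorem heightOf_eq {G : Submodule ℝ (Phase d)} {S : Euc d →L[ℝ] Euc d} (h : IsHeight G S) :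
    heightOf G = S := by
  have hex : ∃ S, IsHeight G S := ⟨S, h⟩
  have hheight : IsHeight G (heightOf G) := by
    rw [heightOf, dif_pos hex]
    exact hex.choose_spec
  have hgraph : LinearMap.graph (heightOf G : Euc d →ₗ[ℝ] Euc d) =
      LinearMap.graph (S : Euc d →ₗ[ℝ] Euc d) := hheight.2.symm.trans h.2
  ext1 v
  exact hgraph.le (x := (v, heightOf G v)) rfl

theorem mem_vert {ξ : Phase d} : ξ ∈ Vert d ↔ ξ.1 = 0 := by
  simp [Vert, Submodule.mem_prod]

variable {R : Phase d →L[ℝ] Phase d}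

/-- The block `∂q/∂q` of an endomorphism of phase space. -/
def baseBlock (R : Phase d →L[ℝ] Phase d) : Euc d →L[ℝ] Euc d :=
  (ContinuousLinearMap.fst ℝ (Euc d) (Euc d)).comp
    (R.comp (ContinuousLinearMap.inl ℝ (Euc d) (Euc d)))

/-- The block `∂q/∂p` of an endomorphism of phase space. -/
def fiberBlock (R : Phase d →L[ℝ] Phase d) : Euc d →L[ℝ] Euc d :=
  (ContinuousLinearMap.fst ℝ (Euc d) (Euc d)).comp
    (R.comp (ContinuousLinearMap.inr ℝ (Euc d) (Euc d)))

theorem continuous_fiberBlock : Continuous (fiberBlock (d := d)) := by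
  unfold fiberBlock
  fun_prop

theorem apply_fst_eq (R : Phase d →L[ℝ] Phase d) (v w : Euc d) :
    (R (v, w)).1 = baseBlock R v + fiberBlock R w := by
  have hsum : ((v, w) : Phase d) = (v, 0) + (0, w) := by simp
  rw [hsum, map_add]
  rfl

/-- The operator `-(∂q/∂p)⁻¹ (∂q/∂q)`, whose graph is the preimage of the vertical under `R`. It is
meaningful only if `∂q/∂p` is invertible: `Ring.inverse` is `0` at non-units. -/
def vertSlope (R : Phase d →L[ℝ] Phase d) : Euc d →L[ℝ] Euc d :=
  -(Ring.inverse (fiberBlock R) * baseBlock R)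

theorem continuousAt_vertSlope (hR : IsUnit (fiberBlock R)) : ContinuousAt vertSlope R := by
  have hbase : Continuous (baseBlock (d := d)) := by unfold baseBlock; fun_prop
  have hinv : ContinuousAt Ring.inverse (fiberBlock R) := by
    obtain ⟨u, hu⟩ := hR
    exact hu ▸ NormedRing.inverse_continuousAt u
  exact ((ContinuousAt.comp hinv continuous_fiberBlock.continuousAt).mul hbase.continuousAt).neg

theorem apply_fst_eq_zero_iff (hR : IsUnit (fiberBlock R)) {v w : Euc d} :
    (R (v, w)).1 = 0 ↔ w = vertSlope R v := by
  have hslope : fiberBlock R (vertSlope R v) = -baseBlock R v := by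
    rw [vertSlope, _root_.neg_apply, map_neg]
    exact congrArg Neg.neg (DFunLike.congr_fun (Ring.mul_inverse_cancel_left _ (baseBlock R) hR) v)
  have hinj : Function.Injective (fiberBlock R) :=
    (ContinuousLinearMap.isUnit_iff_bijective.1 hR).injective
  rw [← hinj.eq_iff (a := w), hslope, apply_fst_eq, add_comm, eq_neg_iff_add_eq_zero]

theorem apply_vertSlope (hR : IsUnit (fiberBlock R)) (v : Euc d) :
    R (v, vertSlope R v) = (0, (R (v, vertSlope R v)).2) :=
  Prod.ext ((apply_fst_eq_zero_iff hR).2 rfl) rfl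

theorem isUnit_fiberBlock (hR : Function.Injective R)
    (hvert : (Vert d).map R.toLinearMap ⊓ Vert d = ⊥) : IsUnit (fiberBlock R) := by
  have hinj : Function.Injective (fiberBlock R) := by
    refine (injective_iff_map_eq_zero _).2 fun w hw => ?_
    have hmem : R (0, w) ∈ (Vert d).map R.toLinearMap ⊓ Vert d :=
      ⟨⟨(0, w), mem_vert.2 rfl, rfl⟩, mem_vert.2 hw⟩
    rw [hvert, Submodule.mem_bot, map_eq_zero_iff R hR] at hmem
    exact congrArg Prod.snd hmem
  exact ContinuousLinearMap.isUnit_iff_bijective.2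
    ⟨hinj, LinearMap.injective_iff_surjective.1 hinj⟩

theorem isHeight_comap_vert {a : ℝ} (ha : a ≠ 0)
    (hsymp : ∀ ξ ζ, sympForm (R ξ) (R ζ) = a * sympForm ξ ζ) (hR : IsUnit (fiberBlock R)) :
    IsHeight ((Vert d).comap R.toLinearMap) (vertSlope R) := by
  refine ⟨fun v w => ?_, ?_⟩
  · have hzero : sympForm (v, vertSlope R v) (w, vertSlope R w) = 0 := by
      refine (mul_eq_zero.1 ?_).resolve_left ha
      rw [← hsymp, apply_vertSlope hR v, apply_vertSlope hR w]
      simp [sympForm]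
    exact (sub_eq_zero.1 hzero).symm
  · ext ⟨v, w⟩
    exact mem_vert.trans (apply_fst_eq_zero_iff hR)

end Height

section Monotonicity

variable {d : ℕ} {R : ℝ → Phase d →L[ℝ] Phase d}

theorem differentiableAt_vertSlope {t : ℝ} (hR : DifferentiableAt ℝ R t)
    (hunit : IsUnit (fiberBlock (R t))) : DifferentiableAt ℝ (fun τ => vertSlope (R τ)) t := by
  have hbase : DifferentiableAt ℝ (fun τ => baseBlock (R τ)) t := by unfold baseBlock; fun_prop
  have hfiber : DifferentiableAt ℝ (fun τ => fiberBlock (R τ)) t := by unfold fiberBlock; fun_prop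
  have hinv : DifferentiableAt ℝ Ring.inverse (fiberBlock (R t)) := by
    obtain ⟨u, hu⟩ := hunit
    exact hu ▸ (hasFDerivAt_ringInverse (𝕜 := ℝ) u).differentiableAt
  exact ((hinv.comp t hfiber).mul hbase).neg

theorem mul_inner_deriv_vertSlope {A : Phase d →L[ℝ] Phase d} {t a : ℝ}
    (hR : HasDerivAt R (A.comp (R t)) t) (hunit : IsUnit (fiberBlock (R t)))
    (hsymp : ∀ ξ ζ, sympForm (R t ξ) (R t ζ) = a * sympForm ξ ζ) (v : Euc d) :
    a * ⟪deriv (fun τ => vertSlope (R τ)) t v, v⟫ =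
      ⟪(A (0, (R t (v, vertSlope (R t) v)).2)).1, (R t (v, vertSlope (R t) v)).2⟫ := by
  set η := deriv (fun τ => vertSlope (R τ)) t v
  set w := (R t (v, vertSlope (R t) v)).2
  have hRt : R t (v, vertSlope (R t) v) = (0, w) := apply_vertSlope hunit v
  have hslope : HasDerivAt (fun τ => vertSlope (R τ) v) η t := by
    simpa using (differentiableAt_vertSlope hR.differentiableAt hunit).hasDerivAt.clm_apply
      (hasDerivAt_const t v)
  have hcurve : HasDerivAt (fun τ => R τ (v, vertSlope (R τ) v)) (A (0, w) + R t (0, η)) t := by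
    rw [← hRt]
    exact hR.clm_apply ((hasDerivAt_const t v).prodMk hslope)
  have hvert : (fun τ => (R τ (v, vertSlope (R τ) v)).1) =ᶠ[nhds t] fun _ => 0 := by
    filter_upwards [(continuous_fiberBlock.continuousAt.comp hR.continuousAt).eventually
      (Units.isOpen.mem_nhds hunit)] with τ hτ using (apply_fst_eq_zero_iff hτ).2 rfl
  have hfst : (A (0, w)).1 + (R t (0, η)).1 = 0 :=
    ((ContinuousLinearMap.fst ℝ (Euc d) (Euc d)).hasFDerivAt.comp_hasDerivAt t hcurve).unique
      ((hasDerivAt_const t 0).congr_of_eventuallyEq hvert)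
  have hform := hsymp (v, vertSlope (R t) v) (0, η)
  simp only [hRt, sympForm, inner_zero_left, inner_zero_right, zero_sub, sub_zero] at hform
  rw [real_inner_comm, ← hform, eq_neg_of_add_eq_zero_left hfst, inner_neg_left, real_inner_comm]

theorem monotoneOn_inner_vertSlope {A : ℝ → Phase d →L[ℝ] Phase d} {a : ℝ → ℝ} {I : Set ℝ}
    (hI : Convex ℝ I) (hR : ∀ t ∈ I, HasDerivAt R ((A t).comp (R t)) t)
    (hA : ∀ t ∈ I, ∀ w, 0 ≤ ⟪(A t (0, w)).1, w⟫) (ha : ∀ t ∈ I, 0 < a t)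
    (hsymp : ∀ t ∈ I, ∀ ξ ζ, sympForm (R t ξ) (R t ζ) = a t * sympForm ξ ζ)
    (hunit : ∀ t ∈ I, IsUnit (fiberBlock (R t))) (v : Euc d) :
    MonotoneOn (fun t => ⟪vertSlope (R t) v, v⟫) I := by
  have hderiv : ∀ t ∈ I, HasDerivAt (fun t => ⟪vertSlope (R t) v, v⟫)
      ⟪deriv (fun τ => vertSlope (R τ)) t v, v⟫ t := fun t ht => by
    have hslope := (differentiableAt_vertSlope (hR t ht).differentiableAt (hunit t ht)).hasDerivAt
    simpa using (hslope.clm_apply (hasDerivAt_const t v)).inner ℝ (hasDerivAt_const t v)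
  refine monotoneOn_of_hasDerivWithinAt_nonneg hI
    (fun t ht => (hderiv t ht).continuousAt.continuousWithinAt)
    (fun t ht => (hderiv t (interior_subset ht)).hasDerivWithinAt) fun t ht => ?_
  have ht' := interior_subset ht
  refine nonneg_of_mul_nonneg_right ?_ (ha t ht')
  rw [mul_inner_deriv_vertSlope (hR t ht') (hunit t ht') (hsymp t ht')]
  exact hA t ht' _

end Monotonicity

section ConformalFlow

variable {d : ℕ} {H : Phase d → ℝ} {lam : ℝ} {φ : ℝ → Phase d → Phase d}

theorem NoConjPts.mono {x : Phase d} {I J : Set ℝ} (h : NoConjPts φ x J) (hIJ : I ⊆ J) :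
    NoConjPts φ x I :=
  fun s hs t ht => h s (hIJ hs) t (hIJ ht)

namespace IsConformalFlow

theorem isCompleteFlow (hφ : IsConformalFlow H lam φ) : IsCompleteFlow (hamVF H lam) φ :=
  ⟨hφ.1, hφ.2.1, hφ.2.2⟩

theorem sympForm_fderiv (hφ : IsConformalFlow H lam φ) (hH : ContDiff ℝ 2 H) (t : ℝ)
    (x ξ ζ : Phase d) :
    sympForm (fderiv ℝ (φ t) x ξ) (fderiv ℝ (φ t) x ζ) = Real.exp (-(lam * t)) * sympForm ξ ζ := by
  have hderiv : ∀ s, HasDerivAt (fun s => Real.exp (lam * s) *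
      sympForm (fderiv ℝ (φ s) x ξ) (fderiv ℝ (φ s) x ζ)) 0 s := fun s => by
    have hlin : ∀ η, HasDerivAt (fun s => fderiv ℝ (φ s) x η)
        (fderiv ℝ (hamVF H lam) (φ s x) (fderiv ℝ (φ s) x η)) s := fun η => by
      simpa using (hφ.isCompleteFlow.hasDerivAt_fderiv (contDiff_hamVF hH lam) x s).clm_apply
        (hasDerivAt_const s η)
    have hexp : HasDerivAt (fun s => Real.exp (lam * s)) (Real.exp (lam * s) * (lam * 1)) s :=
      ((hasDerivAt_id s).const_mul lam).exp
    refine (hexp.mul (hasDerivAt_sympForm (hlin ξ) (hlin ζ))).congr_deriv ?_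
    rw [sympForm_fderiv_hamVF_add hH]
    ring
  have hconst := is_const_of_deriv_eq_zero (fun s => (hderiv s).differentiableAt)
    (fun s => (hderiv s).deriv) t 0
  simp only [hφ.isCompleteFlow.fderiv_zero, mul_zero, Real.exp_zero, one_mul,
    ContinuousLinearMap.id_apply] at hconst
  rw [← hconst, ← mul_assoc, ← Real.exp_add, neg_add_cancel, Real.exp_zero, one_mul]

theorem pushV_neg_apply (hφ : IsConformalFlow H lam φ) (hH : ContDiff ℝ 2 H) (t : ℝ)
    (x : Phase d) : pushV φ (-t) (φ t x) = (Vert d).comap (fderiv ℝ (φ t) x).toLinearMap := by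
  have hleft := hφ.isCompleteFlow.leftInverse_fderiv (contDiff_hamVF hH lam) t x
  have hright := hφ.isCompleteFlow.rightInverse_fderiv (contDiff_hamVF hH lam) t x
  ext ξ
  refine ⟨?_, fun hξ => ⟨_, hξ, hleft ξ⟩⟩
  rintro ⟨ζ, hζ, rfl⟩
  exact (congrArg (· ∈ Vert d) (hright ζ)).mpr hζ

theorem isUnit_fiberBlock_fderiv (hφ : IsConformalFlow H lam φ) (hH : ContDiff ℝ 2 H) {t : ℝ}
    (ht : t ≠ 0) {x : Phase d} (hconj : NoConjPts φ x (uIcc 0 t)) :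
    IsUnit (fiberBlock (fderiv ℝ (φ t) x)) := by
  refine isUnit_fiberBlock
    (hφ.isCompleteFlow.leftInverse_fderiv (contDiff_hamVF hH lam) t x).injective ?_
  simpa [pushV, hφ.isCompleteFlow.map_zero] using
    hconj 0 left_mem_uIcc t right_mem_uIcc ht.symm

theorem hGreenMinus_eq_vertSlope (hφ : IsConformalFlow H lam φ) (hH : ContDiff ℝ 2 H) {t : ℝ}
    {x : Phase d} (hunit : IsUnit (fiberBlock (fderiv ℝ (φ t) x))) :
    hGreenMinus φ t x = vertSlope (fderiv ℝ (φ t) x) := by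
  rw [hGreenMinus, hφ.pushV_neg_apply hH]
  exact heightOf_eq (isHeight_comap_vert (Real.exp_ne_zero _) (hφ.sympForm_fderiv hH t x) hunit)

theorem symLE_hGreenMinus (hφ : IsConformalFlow H lam φ) (hH : ContDiff ℝ 2 H)
    (hconvex : ∀ q p v, 0 ≤ iteratedFDeriv ℝ 2 (fun p' => H (q, p')) p ![v, v]) {s t : ℝ}
    (hs : 0 < s) (hst : s ≤ t) {x : Phase d} (hconj : NoConjPts φ x (uIcc 0 t)) :
    SymLE (hGreenMinus φ s x) (hGreenMinus φ t x) := by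
  intro v
  have hunit : ∀ τ ∈ Icc s t, IsUnit (fiberBlock (fderiv ℝ (φ τ) x)) := fun τ hτ =>
    hφ.isUnit_fiberBlock_fderiv hH (hs.trans_le hτ.1).ne' <| hconj.mono <|
      uIcc_subset_uIcc_left <| Icc_subset_uIcc ⟨hs.le.trans hτ.1, hτ.2⟩
  have hsmem : s ∈ Icc s t := left_mem_Icc.2 hst
  have htmem : t ∈ Icc s t := right_mem_Icc.2 hst
  rw [hφ.hGreenMinus_eq_vertSlope hH (hunit s hsmem),
    hφ.hGreenMinus_eq_vertSlope hH (hunit t htmem)]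
  refine monotoneOn_inner_vertSlope (convex_Icc s t)
    (fun τ _ => hφ.isCompleteFlow.hasDerivAt_fderiv (contDiff_hamVF hH lam) x τ)
    (fun τ _ w => ?_) (fun τ _ => Real.exp_pos _) (fun τ _ => hφ.sympForm_fderiv hH τ x) hunit v
    hsmem htmem hst
  rw [← Prod.mk.eta (p := φ τ x), inner_fderiv_hamVF_fst hH]
  exact hconvex _ _ w

end IsConformalFlow

end ConformalFlow

section QuadraticFormOrder

variable {d : ℕ} {S P Q : Euc d →L[ℝ] Euc d}

theorem SymLE.trans (hSP : SymLE S P) (hPQ : SymLE P Q) : SymLE S Q :=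
  fun v => (hSP v).trans (hPQ v)

theorem symLE_of_tendsto {α : Type*} {l : Filter α} [l.NeBot] {F : α → Euc d →L[ℝ] Euc d}
    (hF : Tendsto F l (nhds P)) (h : ∀ᶠ a in l, SymLE S (F a)) : SymLE S P := fun v => by
  have hcont : Continuous fun Q : Euc d →L[ℝ] Euc d => ⟪Q v, v⟫ := by fun_prop
  exact ge_of_tendsto ((hcont.tendsto P).comp hF) (h.mono fun _ ha => ha v)

theorem symLE_sub_smul_id_of_norm_sub_le {ε : ℝ} (h : ‖S - P‖ ≤ ε) :
    SymLE (S - ε • ContinuousLinearMap.id ℝ (Euc d)) P := fun v => by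
  have hle : ⟪(S - P) v, v⟫ ≤ ε * ⟪v, v⟫ := by
    rw [real_inner_self_eq_norm_mul_norm, ← mul_assoc]
    exact (real_inner_le_norm _ _).trans (by gcongr; exact (S - P).le_of_opNorm_le h v)
  have hexpand : ⟪(S - ε • ContinuousLinearMap.id ℝ (Euc d)) v, v⟫ = ⟪S v, v⟫ - ε * ⟪v, v⟫ := by
    simp [inner_sub_left, real_inner_smul_left]
  rw [_root_.sub_apply, inner_sub_left] at hle
  linarith

end QuadraticFormOrder

section LowerSemicontinuity

variable {d : ℕ} {C : Type*} [MetricSpace C] {Hfam : C → Phase d → ℝ}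
  {φfam : C → ℝ → ℝ → Phase d → Phase d}

theorem C2CompactOpenCont.continuous_fderiv_flow (hcont : C2CompactOpenCont Hfam)
    (hsm : ∀ c, ContDiff ℝ 2 (Hfam c))
    (hflow : ∀ c lam, IsConformalFlow (Hfam c) lam (φfam c lam)) {T : ℝ} (hT : 0 ≤ T) :
    Continuous fun q : (C × ℝ) × Phase d => fderiv ℝ (φfam q.1.1 q.1.2 T) q.2 :=
  IsCompleteFlow.continuous_fderiv_flow (φ := fun a : C × ℝ => φfam a.1 a.2)
    (fun a => (hflow a.1 a.2).isCompleteFlow) (fun a => contDiff_hamVF (hsm a.1) a.2)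
    (hcont.continuous_hamVF hsm) (hcont.continuous_fderiv_hamVF hsm) hT

theorem C2CompactOpenCont.eventually_forall_symLE_hGreenMinus (hcont : C2CompactOpenCont Hfam)
    (hsm : ∀ c, ContDiff ℝ 2 (Hfam c))
    (hconvex : ∀ c q p v, 0 ≤ iteratedFDeriv ℝ 2 (fun p' => Hfam c (q, p')) p ![v, v])
    (hflow : ∀ c lam, IsConformalFlow (Hfam c) lam (φfam c lam)) {x : Phase d} {c₀ : C}
    {lam₀ T : ℝ} (hT : 0 < T) (hconj : NoConjPts (φfam c₀ lam₀) x (uIcc 0 T))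
    {S : Euc d →L[ℝ] Euc d} {ε : ℝ} (hS : dist (hGreenMinus (φfam c₀ lam₀) T x) S < ε) :
    ∀ᶠ q : (C × ℝ) × Phase d in nhds ((c₀, lam₀), x), ∀ t, T ≤ t →
      NoConjPts (φfam q.1.1 q.1.2) q.2 (uIcc 0 t) →
      SymLE (S - ε • ContinuousLinearMap.id ℝ (Euc d)) (hGreenMinus (φfam q.1.1 q.1.2) t q.2) := by
  have hunit := (hflow c₀ lam₀).isUnit_fiberBlock_fderiv (hsm c₀) hT.ne' hconj
  rw [(hflow c₀ lam₀).hGreenMinus_eq_vertSlope (hsm c₀) hunit] at hS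
  have hslope : ContinuousAt (fun q : (C × ℝ) × Phase d =>
      vertSlope (fderiv ℝ (φfam q.1.1 q.1.2 T) q.2)) ((c₀, lam₀), x) :=
    ContinuousAt.comp (g := vertSlope) (continuousAt_vertSlope hunit)
      (hcont.continuous_fderiv_flow hsm hflow hT.le).continuousAt
  filter_upwards [hslope.eventually (isOpen_ball.mem_nhds hS)]
    with ⟨⟨c, lam⟩, y⟩ hclose t ht hconj_t
  have hφ := hflow c lam
  have hconj_T : NoConjPts (φfam c lam) y (uIcc 0 T) :=
    hconj_t.mono (uIcc_subset_uIcc_left (Icc_subset_uIcc ⟨hT.le, ht⟩))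
  have hle_T : SymLE (S - ε • ContinuousLinearMap.id ℝ (Euc d)) (hGreenMinus (φfam c lam) T y) := by
    rw [hφ.hGreenMinus_eq_vertSlope (hsm c) (hφ.isUnit_fiberBlock_fderiv (hsm c) hT.ne' hconj_T)]
    exact symLE_sub_smul_id_of_norm_sub_le (mem_ball_iff_norm'.1 hclose).le
  exact hle_T.trans (hφ.symLE_hGreenMinus (hsm c) (hconvex c) hT ht hconj_t)

end LowerSemicontinuity

theorem stmt_11_general {d : ℕ} {C : Type*} [MetricSpace C]
    (Hfam : C → Phase d → ℝ) (hsm : ∀ c, ContDiff ℝ 2 (Hfam c))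
    (hconvex : ∀ c q p v, 0 ≤ iteratedFDeriv ℝ 2 (fun p' => Hfam c (q, p')) p ![v, v])
    (hcont : C2CompactOpenCont Hfam) (φfam : C → ℝ → ℝ → Phase d → Phase d)
    (hflow : ∀ c lam, IsConformalFlow (Hfam c) lam (φfam c lam))
    (x : Phase d) (c0 : C) (lam0 : ℝ)
    (hUinf : ∀ t : ℝ, 0 ≤ t → NoConjPts (φfam c0 lam0) x (uIcc 0 t))
    (S0 : Euc d →L[ℝ] Euc d)
    (hS0 : Tendsto (fun t => hGreenMinus (φfam c0 lam0) t x) atTop (nhds S0))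
    (ε : ℝ) (hε : 0 < ε) :
    ∃ δ > (0:ℝ), ∃ T > (0:ℝ),
      (∀ (y : Phase d) (c : C) (lam t : ℝ),
        dist y x < δ → dist c c0 < δ → |lam - lam0| < δ → T ≤ t →
        NoConjPts (φfam c lam) y (uIcc 0 t) →
        SymLE (S0 - ε • ContinuousLinearMap.id ℝ (Euc d)) (hGreenMinus (φfam c lam) t y)) ∧
      (∀ (y : Phase d) (c : C) (lam : ℝ),
        dist y x < δ → dist c c0 < δ → |lam - lam0| < δ →
        (∀ t : ℝ, 0 ≤ t → NoConjPts (φfam c lam) y (uIcc 0 t)) →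
        ∀ S : Euc d →L[ℝ] Euc d,
          Tendsto (fun t => hGreenMinus (φfam c lam) t y) atTop (nhds S) →
          SymLE (S0 - ε • ContinuousLinearMap.id ℝ (Euc d)) S) := by
  obtain ⟨T, hclose, hT⟩ :=
    ((hS0.eventually (ball_mem_nhds S0 hε)).and (eventually_gt_atTop 0)).exists
  obtain ⟨δ, hδ, hnear⟩ := Metric.eventually_nhds_iff.1 <|
    hcont.eventually_forall_symLE_hGreenMinus hsm hconvex hflow hT (hUinf T hT.le) hclose
  refine ⟨δ, hδ, T, hT, fun y c lam t hy hc hlam => ?_, fun y c lam hy hc hlam hconj S hS => ?_⟩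
  · exact hnear (y := ((c, lam), y)) (max_lt (max_lt hc hlam) hy) t
  · refine symLE_of_tendsto hS ?_
    filter_upwards [eventually_ge_atTop T] with t ht using
      hnear (y := ((c, lam), y)) (max_lt (max_lt hc hlam) hy) t ht (hconj t (hT.le.trans ht))

/-- **Proposition (lower semicontinuity of `h₋`).** For a continuous family `c ↦ H_c` of
`C²`-convex-in-the-fiber Hamiltonians, `(x, c₀, λ₀) ∈ 𝒰₊^∞` and `ε > 0`, there are a
neighborhood `𝒩₋` of `(x, c₀, λ₀)` and `T > 0` such that `h(t,y,c,λ) ≥ h₋(x,c₀,λ₀) - ε·Id`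
for `(t,y,c,λ) ∈ 𝒰₊` with `(y,c,λ) ∈ 𝒩₋`, `t ≥ T`, and `h₋(y,c,λ) ≥ h₋(x,c₀,λ₀) - ε·Id`
for `(y,c,λ) ∈ 𝒩₋ ∩ 𝒰₊^∞`. -/
theorem stmt_11 {d : ℕ} {C : Type*} [MetricSpace C]
    (Hfam : C → Phase d → ℝ)
    (hsm : ∀ c, ContDiff ℝ 2 (Hfam c)) (hcvx : ∀ c, ConvexInFiber (Hfam c))
    (hper : ∀ c, PerPhase (Hfam c)) (hcont : C2CompactOpenCont Hfam)
    (φfam : C → ℝ → ℝ → Phase d → Phase d)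
    (hflow : ∀ c lam, IsConformalFlow (Hfam c) lam (φfam c lam))
    (x : Phase d) (c0 : C) (lam0 : ℝ)
    (hUinf : ∀ t : ℝ, 0 ≤ t → NoConjPts (φfam c0 lam0) x (uIcc 0 t))
    (S0 : Euc d →L[ℝ] Euc d)
    (hS0 : Tendsto (fun t => hGreenMinus (φfam c0 lam0) t x) atTop (nhds S0))
    (ε : ℝ) (hε : 0 < ε) :
    ∃ δ > (0:ℝ), ∃ T > (0:ℝ),
      (∀ (y : Phase d) (c : C) (lam t : ℝ),
        dist y x < δ → dist c c0 < δ → |lam - lam0| < δ → T ≤ t →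
        NoConjPts (φfam c lam) y (uIcc 0 t) →
        SymLE (S0 - ε • ContinuousLinearMap.id ℝ (Euc d)) (hGreenMinus (φfam c lam) t y)) ∧
      (∀ (y : Phase d) (c : C) (lam : ℝ),
        dist y x < δ → dist c c0 < δ → |lam - lam0| < δ →
        (∀ t : ℝ, 0 ≤ t → NoConjPts (φfam c lam) y (uIcc 0 t)) →
        ∀ S : Euc d →L[ℝ] Euc d,
          Tendsto (fun t => hGreenMinus (φfam c lam) t y) atTop (nhds S) →
          SymLE (S0 - ε • ContinuousLinearMap.id ℝ (Euc d)) S) :=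
  stmt_11_general Hfam hsm (fun c => (hcvx c).iteratedFDeriv_nonneg) hcont φfam hflow x c0 lam0
    hUinf S0 hS0 ε hε
end
end

section
/- For the pendulum Hamiltonian H(q,p) = p²/2 + cos(2πq) on 𝕋 × ℝ, set I₊ = ∫₀¹ √(2(1 − cos(2πq))) dq and c(e) = ∫₀¹ √(2(e − cos(2πq))) dq for e ≥ 1, and for I ∈ [I₊,∞) define u_I(q) = ∫₀^q ( √(2(c⁻¹(I) − cos(2πs))) − I ) ds. Then: (1) c : [1,∞) → [I₊,∞) is a homeomorphism and its restriction to (1,∞) is a diffeomorphism; (2) each u_I is C¹; (3) for every I > I₊ one has ‖u_I'' − u_{I₊}''‖_{L^∞} ≥ 1/4. In particular, the family of weak K.A.M. solutions (u_I) does not depend continuously on I at I = I₊ for the uniform C² distance. -/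
/-!
The simple pendulum `H(q,p) = p²/2 + cos(2πq)` on `T^*𝕋 = 𝕋 × ℝ` (with `𝕋 = ℝ/ℤ`
modelled by `1`-periodic functions on `ℝ`).
-/

open Set Filter

noncomputable section

/-- `I₊ = ∫₀¹ √(2(1 - cos 2πq)) dq`. -/
def Iplus : ℝ := ∫ q in (0:ℝ)..1, Real.sqrt (2 * (1 - Real.cos (2 * Real.pi * q)))

/-- `c(e) = ∫₀¹ √(2(e - cos 2πq)) dq`. -/
def pendc (e : ℝ) : ℝ := ∫ q in (0:ℝ)..1, Real.sqrt (2 * (e - Real.cos (2 * Real.pi * q)))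

/-- The inverse `c⁻¹ : [I₊, ∞) → [1, ∞)` of `c`. -/
def pendcInv : ℝ → ℝ := Function.invFunOn pendc (Ici 1)

/-- The weak K.A.M. solution `u_I(q) = ∫₀^q (√(2(c⁻¹(I) - cos 2πs)) - I) ds` for the
cohomology class `I ∈ [I₊, ∞)`. -/
def uPend (I q : ℝ) : ℝ :=
  ∫ s in (0:ℝ)..q, (Real.sqrt (2 * (pendcInv I - Real.cos (2 * Real.pi * s))) - I)

/-!
On the energy level `e = c⁻¹(I)` the momentum `p = √(2(e - cos 2πq))` equals `u_I' + I`, and `c(e)`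
is its integral over a period. The momentum increases strictly with `e`, so `c` does too, and for
`e > 1` it is bounded away from `0`, so `c` may be differentiated under the integral sign.

The half-angle formula reads `p² = 2(e - 1) + (2 sin πq)²`. For `e > 1` the momentum is
smooth and even in `q`, so `u_I''` tends to `0` at `q = 0`. On the separatrix `e = 1` it is
`2|sin πq|`, whose corner at `0` makes `u_{I₊}''` tend to `2π` from the right. Hence
`|u_I'' - u_{I₊}''|` exceeds any constant below `2π` on an interval `(0, δ)`.
-/

open scoped Topology Interval Real

section General

lemma measure_pos_of_mem_nhdsGT {α : Type*} [TopologicalSpace α] [LinearOrder α] [OrderTopology α]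
    [DenselyOrdered α] [NoMaxOrder α] [MeasurableSpace α] {μ : MeasureTheory.Measure α}
    [μ.IsOpenPosMeasure] {a : α} {s : Set α} (hs : s ∈ 𝓝[>] a) : 0 < μ s := by
  obtain ⟨b, hab, hsub⟩ := mem_nhdsGT_iff_exists_Ioo_subset.1 hs
  exact (isOpen_Ioo.measure_pos μ (nonempty_Ioo.2 hab)).trans_le (MeasureTheory.measure_mono hsub)

lemma continuousOn_invFunOn_of_strictMonoOn {α β : Type*} [Nonempty α]
    [LinearOrder α] [TopologicalSpace α] [OrderTopology α]
    [LinearOrder β] [TopologicalSpace β] [OrderTopology β]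
    {f : α → β} {s : Set α} {t : Set β} [s.OrdConnected] [t.OrdConnected]
    (hf : StrictMonoOn f s) (hst : BijOn f s t) : ContinuousOn (Function.invFunOn f s) t := by
  have hf_order : StrictMono (hst.mapsTo.restrict f s t) := fun x y hxy => hf x.2 y.2 hxy
  let f_iso : s ≃o t := hf_order.orderIsoOfSurjective _ hst.bijective.surjective
  have h_symm (y : t) : Function.invFunOn f s y = f_iso.symm y := by
    obtain ⟨x, rfl⟩ := f_iso.surjective y
    rw [f_iso.symm_apply_apply]
    exact hst.injOn.leftInvOn_invFunOn x.2
  rw [continuousOn_iff_continuous_domRestrict]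
  exact (continuous_subtype_val.comp f_iso.symm.continuous).congr fun y => (h_symm y).symm

lemma hasDerivAt_invFunOn {𝕜 : Type*} [NontriviallyNormedField 𝕜] {f : 𝕜 → 𝕜} {f' x : 𝕜}
    {s t : Set 𝕜} (hst : BijOn f s t) (hx : x ∈ s) (ht : t ∈ 𝓝 (f x))
    (hcont : ContinuousOn (Function.invFunOn f s) t) (hf : HasDerivAt f f' x) (hf' : f' ≠ 0) :
    HasDerivAt (Function.invFunOn f s) f'⁻¹ (f x) := by
  refine HasDerivAt.of_local_left_inverse (f := f) (hcont.continuousAt ht) ?_ hf' ?_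
  · rwa [hst.injOn.leftInvOn_invFunOn hx]
  · filter_upwards [ht] with y hy using hst.surjOn.rightInvOn_invFunOn hy

lemma abs_sqrt_add_sq_sub_sqrt_add_sq_le {k : ℝ} (hk : 0 ≤ k) (x y : ℝ) :
    |√(k + x ^ 2) - √(k + y ^ 2)| ≤ |x - y| := by
  -- `√(k + x²)` is the modulus of the complex number `√k + x i`.
  have h_norm (z : ℝ) : √(k + z ^ 2) = ‖(√k : ℂ) + z * Complex.I‖ := by
    rw [Complex.norm_add_mul_I, Real.sq_sqrt hk]
  calc |√(k + x ^ 2) - √(k + y ^ 2)|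
      ≤ ‖((√k : ℂ) + x * Complex.I) - (√k + y * Complex.I)‖ := by
        rw [h_norm, h_norm]
        exact abs_norm_sub_norm_le _ _
    _ = ‖((x - y : ℝ) : ℂ) * Complex.I‖ := by
        push_cast
        ring_nf
    _ = |x - y| := by
        rw [norm_mul, Complex.norm_I, mul_one, Complex.norm_real, Real.norm_eq_abs]

end General

section Momentum

/-- The nonnegative momentum at position `q` on the energy level `e` of the Hamiltonian
`p² / 2 + V q`; it is `0` where `V q > e`. -/
def momentum (V : ℝ → ℝ) (e q : ℝ) : ℝ := √(2 * (e - V q))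

/-- The action `∫ p dq` of the energy level `e` over `[a, b]`, as a function of the energy. -/
def actionIntegral (V : ℝ → ℝ) (a b e : ℝ) : ℝ := ∫ q in a..b, momentum V e q

variable {V : ℝ → ℝ} {V' a b e e' q M : ℝ}

lemma momentum_pos (h : V q < e) : 0 < momentum V e q := Real.sqrt_pos.2 (by linarith)

lemma momentum_lt_momentum (hV : V q ≤ e) (h : e < e') : momentum V e q < momentum V e' q :=
  Real.sqrt_lt_sqrt (by linarith) (by linarith)

lemma continuous_uncurry_momentum (hV : Continuous V) :
    Continuous (Function.uncurry (momentum V)) := by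
  unfold momentum Function.uncurry
  fun_prop

lemma continuous_momentum (hV : Continuous V) (e : ℝ) : Continuous (momentum V e) :=
  (continuous_uncurry_momentum hV).comp (Continuous.prodMk_right e)

lemma hasDerivAt_momentum_energy (h : V q < e) :
    HasDerivAt (fun e => momentum V e q) (1 / momentum V e q) e := by
  have h_inner : HasDerivAt (fun e => 2 * (e - V q)) 2 e := by
    simpa using ((hasDerivAt_id e).sub_const (V q)).const_mul 2
  refine (h_inner.sqrt (by linarith)).congr_deriv ?_
  have := momentum_pos h
  unfold momentum at this ⊢
  field_simp

lemma hasDerivAt_momentum (hV : HasDerivAt V V' q) (h : V q < e) :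
    HasDerivAt (momentum V e) (-V' / momentum V e q) q := by
  refine (((hV.const_sub e).const_mul 2).sqrt (by linarith)).congr_deriv ?_
  have := momentum_pos h
  unfold momentum at this ⊢
  field_simp

lemma continuous_actionIntegral (hV : Continuous V) (a b : ℝ) :
    Continuous (actionIntegral V a b) :=
  intervalIntegral.continuous_parametric_intervalIntegral_of_continuous'
    (continuous_uncurry_momentum hV) a b

lemma strictMonoOn_actionIntegral (hV : Continuous V) (hab : a < b)
    (hM : ∀ q ∈ Icc a b, V q ≤ M) : StrictMonoOn (actionIntegral V a b) (Ici M) := by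
  intro e he e' _ hee'
  have h_lt (q : ℝ) (hq : q ∈ Icc a b) : momentum V e q < momentum V e' q :=
    momentum_lt_momentum ((hM q hq).trans he) hee'
  exact intervalIntegral.integral_lt_integral_of_continuousOn_of_le_of_exists_lt hab
    (continuous_momentum hV e).continuousOn (continuous_momentum hV e').continuousOn
    (fun q hq => (h_lt q (Ioc_subset_Icc_self hq)).le)
    ⟨a, left_mem_Icc.2 hab.le, h_lt a (left_mem_Icc.2 hab.le)⟩

lemma mul_sqrt_le_actionIntegral (hV : Continuous V) (hab : a ≤ b)
    (hM : ∀ q ∈ Icc a b, V q ≤ M) (e : ℝ) :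
    (b - a) * √(2 * (e - M)) ≤ actionIntegral V a b e := by
  calc (b - a) * √(2 * (e - M)) = ∫ _ in a..b, √(2 * (e - M)) := by
        rw [intervalIntegral.integral_const, smul_eq_mul]
    _ ≤ actionIntegral V a b e :=
      intervalIntegral.integral_mono_on hab intervalIntegrable_const
        ((continuous_momentum hV e).intervalIntegrable a b)
        fun q hq => Real.sqrt_le_sqrt (by linarith [hM q hq])

lemma tendsto_actionIntegral_atTop (hV : Continuous V) (hab : a < b) :
    Tendsto (actionIntegral V a b) atTop atTop := by
  obtain ⟨M, hM⟩ := isCompact_Icc.bddAbove_image (hV.continuousOn (s := Icc a b))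
  refine tendsto_atTop_mono
    (mul_sqrt_le_actionIntegral hV hab.le fun q hq => hM (mem_image_of_mem V hq)) ?_
  exact (Real.tendsto_sqrt_atTop.comp ((tendsto_atTop_add_const_right atTop (-M)
    tendsto_id).const_mul_atTop two_pos)).const_mul_atTop (sub_pos.2 hab)

lemma bijOn_actionIntegral (hV : Continuous V) (hab : a < b) (hM : ∀ q ∈ Icc a b, V q ≤ M) :
    BijOn (actionIntegral V a b) (Ici M) (Ici (actionIntegral V a b M)) := by
  have h_mono := strictMonoOn_actionIntegral hV hab hM
  refine ⟨fun e he => h_mono.monotoneOn self_mem_Ici he he, h_mono.injOn, ?_⟩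
  exact intermediate_value_Ici (continuous_actionIntegral hV a b).continuousOn
    (tendsto_actionIntegral_atTop hV hab)

lemma intervalIntegrable_one_div_momentum (hV : Continuous V) (he : ∀ q ∈ uIcc a b, V q < e) :
    IntervalIntegrable (fun q => 1 / momentum V e q) MeasureTheory.volume a b :=
  (continuousOn_const.div (continuous_momentum hV e).continuousOn
    fun q hq => (momentum_pos (he q hq)).ne').intervalIntegrable

lemma integral_one_div_momentum_pos (hV : Continuous V) (hab : a < b)
    (he : ∀ q ∈ Icc a b, V q < e) : 0 < ∫ q in a..b, 1 / momentum V e q :=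
  intervalIntegral.intervalIntegral_pos_of_pos_on
    (intervalIntegrable_one_div_momentum hV (by rwa [uIcc_of_le hab.le]))
    (fun q hq => one_div_pos.2 (momentum_pos (he q (Ioo_subset_Icc_self hq)))) hab

lemma hasDerivAt_actionIntegral (hV : Continuous V) (he : ∀ q ∈ uIcc a b, V q < e) :
    HasDerivAt (actionIntegral V a b) (∫ q in a..b, 1 / momentum V e q) e := by
  obtain ⟨q₀, hq₀, h_max⟩ :=
    isCompact_uIcc.exists_isMaxOn nonempty_uIcc (hV.continuousOn (s := uIcc a b))
  have h_gap : V q₀ < e := he q₀ hq₀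
  -- The derivative of the integrand blows up at `V q₀`, so energies stay above the midpoint.
  have h_level {x q : ℝ} (hx : x ∈ Ioi ((V q₀ + e) / 2)) (hq : q ∈ Ι a b) :
      V q < x ∧ e - V q₀ ≤ 2 * (x - V q) := by
    have hVq : V q ≤ V q₀ := h_max (uIoc_subset_uIcc hq)
    constructor <;> linarith [mem_Ioi.1 hx]
  refine (intervalIntegral.hasDerivAt_integral_of_dominated_loc_of_deriv_le
    (F' := fun x q => 1 / momentum V x q) (bound := fun _ => 1 / √(e - V q₀))
    (Ioi_mem_nhds (by linarith))
    (.of_forall fun x => (continuous_momentum hV x).aestronglyMeasurable)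
    ((continuous_momentum hV e).intervalIntegrable a b)
    (intervalIntegrable_one_div_momentum hV he).aestronglyMeasurable_restrict_uIoc
    (.of_forall fun q hq x hx => ?_) intervalIntegrable_const
    (.of_forall fun q hq x hx => hasDerivAt_momentum_energy (h_level hx hq).1)).2
  rw [Real.norm_of_nonneg (one_div_pos.2 (momentum_pos (h_level hx hq).1)).le]
  exact one_div_le_one_div_of_le (Real.sqrt_pos.2 (sub_pos.2 h_gap))
    (Real.sqrt_le_sqrt (h_level hx hq).2)

end Momentum

section Pendulum

/-- The potential `cos 2πq` of the pendulum Hamiltonian. -/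
def pendulumPotential (q : ℝ) : ℝ := Real.cos (2 * π * q)

/-- The pointwise contribution `|u_I''(q) - u_{I₊}''(q)|` to the `C²` distance from `u_I` to
`u_{I₊}`. At points where a second derivative does not exist, `deriv` takes it to be `0`. -/
def secondDerivGap (I q : ℝ) : ℝ :=
  |deriv (deriv (uPend I)) q - deriv (deriv (uPend Iplus)) q|

variable {I e q : ℝ}

lemma pendulumPotential_le_one (q : ℝ) : pendulumPotential q ≤ 1 := Real.cos_le_one _

lemma hasDerivAt_pendulumPotential (q : ℝ) :
    HasDerivAt pendulumPotential (-(2 * π * Real.sin (2 * π * q))) q :=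
  ((hasDerivAt_const_mul (2 * π)).cos).congr_deriv (by ring)

lemma continuous_pendulumPotential : Continuous pendulumPotential :=
  continuous_iff_continuousAt.2 fun q => (hasDerivAt_pendulumPotential q).continuousAt

lemma momentum_pendulumPotential (e q : ℝ) :
    momentum pendulumPotential e q = √(2 * (e - 1) + (2 * Real.sin (π * q)) ^ 2) := by
  rw [momentum, pendulumPotential, mul_assoc, Real.cos_two_mul_eq_one_sub]
  ring_nf

lemma momentum_pendulumPotential_one (q : ℝ) :
    momentum pendulumPotential 1 q = |2 * Real.sin (π * q)| := by
  rw [momentum_pendulumPotential, sub_self, mul_zero, zero_add, Real.sqrt_sq_eq_abs]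

lemma lipschitzWith_momentum_pendulumPotential (he : 1 ≤ e) :
    LipschitzWith (2 * NNReal.pi) (momentum pendulumPotential e) := by
  refine LipschitzWith.of_dist_le_mul fun q r => ?_
  simp only [Real.dist_eq, momentum_pendulumPotential]
  calc |√(2 * (e - 1) + (2 * Real.sin (π * q)) ^ 2) - √(2 * (e - 1) + (2 * Real.sin (π * r)) ^ 2)|
      ≤ |2 * Real.sin (π * q) - 2 * Real.sin (π * r)| :=
        abs_sqrt_add_sq_sub_sqrt_add_sq_le (by linarith) _ _
    _ = 2 * |Real.sin (π * q) - Real.sin (π * r)| := by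
        rw [← mul_sub, abs_mul, abs_two]
    _ ≤ 2 * |π * q - π * r| := mul_le_mul_of_nonneg_left (Real.abs_sin_sub_sin_le _ _) two_pos.le
    _ = (2 * NNReal.pi : NNReal) * |q - r| := by
        rw [← mul_sub, abs_mul, abs_of_pos Real.pi_pos, ← mul_assoc]
        rfl

lemma strictMonoOn_pendc : StrictMonoOn pendc (Ici 1) :=
  strictMonoOn_actionIntegral continuous_pendulumPotential one_pos
    fun q _ => pendulumPotential_le_one q

lemma bijOn_pendc : BijOn pendc (Ici 1) (Ici Iplus) :=
  bijOn_actionIntegral continuous_pendulumPotential one_pos fun q _ => pendulumPotential_le_one q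

lemma continuous_pendc : Continuous pendc :=
  continuous_actionIntegral continuous_pendulumPotential 0 1

lemma continuousOn_pendcInv : ContinuousOn pendcInv (Ici Iplus) :=
  continuousOn_invFunOn_of_strictMonoOn strictMonoOn_pendc bijOn_pendc

lemma exists_hasDerivAt_pendc_pendcInv (he : 1 < e) :
    ∃ c' : ℝ, c' ≠ 0 ∧ HasDerivAt pendc c' e ∧ HasDerivAt pendcInv c'⁻¹ (pendc e) := by
  have h_below (q : ℝ) : pendulumPotential q < e := (pendulumPotential_le_one q).trans_lt he
  have h_deriv : HasDerivAt pendc (∫ q in (0 : ℝ)..1, 1 / momentum pendulumPotential e q) e :=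
    hasDerivAt_actionIntegral continuous_pendulumPotential fun q _ => h_below q
  have h_ne := (integral_one_div_momentum_pos continuous_pendulumPotential one_pos
    fun q (_ : q ∈ Icc (0 : ℝ) 1) => h_below q).ne'
  have h_nhds : Ici Iplus ∈ 𝓝 (pendc e) :=
    Ici_mem_nhds (strictMonoOn_pendc self_mem_Ici he.le he)
  exact ⟨_, h_ne, h_deriv,
    hasDerivAt_invFunOn bijOn_pendc he.le h_nhds continuousOn_pendcInv h_deriv h_ne⟩

lemma pendcInv_Iplus : pendcInv Iplus = 1 :=
  bijOn_pendc.injOn.leftInvOn_invFunOn (self_mem_Ici : (1 : ℝ) ∈ Ici 1)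

lemma one_le_pendcInv (hI : Iplus ≤ I) : 1 ≤ pendcInv I :=
  bijOn_pendc.surjOn.mapsTo_invFunOn hI

lemma one_lt_pendcInv (hI : Iplus < I) : 1 < pendcInv I := by
  refine (one_le_pendcInv hI.le).lt_of_ne fun h => hI.ne ?_
  calc Iplus = pendc (pendcInv I) := by rw [← h]; rfl
    _ = I := bijOn_pendc.surjOn.rightInvOn_invFunOn hI.le

lemma hasDerivAt_uPend (I q : ℝ) :
    HasDerivAt (uPend I) (momentum pendulumPotential (pendcInv I) q - I) q :=
  (((continuous_momentum continuous_pendulumPotential _).sub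
    continuous_const).integral_hasStrictDerivAt 0 q).hasDerivAt

lemma deriv_uPend (I : ℝ) :
    deriv (uPend I) = fun q => momentum pendulumPotential (pendcInv I) q - I :=
  funext fun q => (hasDerivAt_uPend I q).deriv

lemma contDiff_one_uPend (I : ℝ) : ContDiff ℝ 1 (uPend I) := by
  refine contDiff_one_iff_deriv.2 ⟨fun q => (hasDerivAt_uPend I q).differentiableAt, ?_⟩
  rw [deriv_uPend]
  exact (continuous_momentum continuous_pendulumPotential _).sub continuous_const

lemma abs_deriv_deriv_uPend_le (hI : Iplus ≤ I) (q : ℝ) :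
    |deriv (deriv (uPend I)) q| ≤ 2 * π := by
  rw [deriv_uPend, deriv_sub_const]
  exact norm_deriv_le_of_lipschitz (lipschitzWith_momentum_pendulumPotential (one_le_pendcInv hI))

lemma deriv_deriv_uPend (hI : Iplus < I) (q : ℝ) :
    deriv (deriv (uPend I)) q =
      2 * π * Real.sin (2 * π * q) / momentum pendulumPotential (pendcInv I) q := by
  have h_below := (pendulumPotential_le_one q).trans_lt (one_lt_pendcInv hI)
  rw [deriv_uPend, deriv_sub_const,
    (hasDerivAt_momentum (hasDerivAt_pendulumPotential q) h_below).deriv, neg_neg]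

lemma deriv_deriv_uPend_Iplus (hq : q ∈ Ioo 0 1) :
    deriv (deriv (uPend Iplus)) q = 2 * π * Real.cos (π * q) := by
  have h_momentum : momentum pendulumPotential 1 =ᶠ[𝓝 q] fun r => 2 * Real.sin (π * r) := by
    filter_upwards [Ioo_mem_nhds hq.1 hq.2] with r hr
    have h_sin : 0 < Real.sin (π * r) := Real.sin_pos_of_pos_of_lt_pi
      (mul_pos Real.pi_pos hr.1) (mul_lt_of_lt_one_right Real.pi_pos hr.2)
    rw [momentum_pendulumPotential_one, abs_of_pos (by positivity)]
  rw [deriv_uPend, deriv_sub_const, pendcInv_Iplus, h_momentum.deriv_eq]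
  exact (((hasDerivAt_const_mul π).sin.const_mul 2).congr_deriv (by ring)).deriv

lemma tendsto_deriv_deriv_uPend_zero (hI : Iplus < I) :
    Tendsto (deriv (deriv (uPend I))) (𝓝 0) (𝓝 0) := by
  have h_cont : Continuous (deriv (deriv (uPend I))) := by
    rw [funext (deriv_deriv_uPend hI)]
    exact Continuous.div (by fun_prop) (continuous_momentum continuous_pendulumPotential _) fun q =>
      (momentum_pos ((pendulumPotential_le_one q).trans_lt (one_lt_pendcInv hI))).ne'
  exact h_cont.tendsto' 0 0 (by simp [deriv_deriv_uPend hI])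

lemma tendsto_deriv_deriv_uPend_Iplus :
    Tendsto (deriv (deriv (uPend Iplus))) (𝓝[>] 0) (𝓝 (2 * π)) := by
  have h_cos : Tendsto (fun q => 2 * π * Real.cos (π * q)) (𝓝[>] 0) (𝓝 (2 * π)) :=
    tendsto_nhdsWithin_of_tendsto_nhds (Continuous.tendsto' (by fun_prop) _ _ (by simp))
  refine h_cos.congr' ?_
  filter_upwards [Ioo_mem_nhdsGT one_pos] with q hq using (deriv_deriv_uPend_Iplus hq).symm

lemma tendsto_secondDerivGap (hI : Iplus < I) :
    Tendsto (secondDerivGap I) (𝓝[>] 0) (𝓝 (2 * π)) := by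
  have h_sub := ((tendsto_deriv_deriv_uPend_zero hI).mono_left nhdsWithin_le_nhds).sub
    tendsto_deriv_deriv_uPend_Iplus
  simpa [abs_of_pos Real.pi_pos] using! h_sub.abs

lemma volume_setOf_le_secondDerivGap_pos (hI : Iplus < I) {K : ℝ} (hK : K < 2 * π) :
    0 < MeasureTheory.volume {q : ℝ | q ∈ Icc (0 : ℝ) 1 ∧ K ≤ secondDerivGap I q} := by
  refine measure_pos_of_mem_nhdsGT (a := 0) ?_
  filter_upwards [Icc_mem_nhdsGT one_pos, (tendsto_secondDerivGap hI).eventually_const_le hK]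
    with q hq hKq using ⟨hq, hKq⟩

lemma secondDerivGap_le (hI : Iplus ≤ I) (q : ℝ) : secondDerivGap I q ≤ 2 * π + 2 * π :=
  (abs_sub _ _).trans
    (add_le_add (abs_deriv_deriv_uPend_le hI q) (abs_deriv_deriv_uPend_le le_rfl q))

lemma two_pi_le_iSup_secondDerivGap (hI : Iplus < I) :
    2 * π ≤ ⨆ q : Icc (0 : ℝ) 1, secondDerivGap I q := by
  refine le_of_tendsto (tendsto_secondDerivGap hI) ?_
  have h_bdd : BddAbove (range fun q : Icc (0 : ℝ) 1 => secondDerivGap I q) :=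
    ⟨2 * π + 2 * π, forall_mem_range.2 fun q => secondDerivGap_le hI.le q⟩
  filter_upwards [Icc_mem_nhdsGT one_pos] with q hq using le_ciSup h_bdd ⟨q, hq⟩

lemma not_tendsto_iSup_secondDerivGap :
    ¬ Tendsto (fun I => ⨆ q : Icc (0 : ℝ) 1, secondDerivGap I q) (𝓝[>] Iplus) (𝓝 0) := by
  intro h
  have h_le : 2 * π ≤ 0 := ge_of_tendsto h <| by
    filter_upwards [self_mem_nhdsWithin] with I hI using two_pi_le_iSup_secondDerivGap hI
  exact h_le.not_gt Real.two_pi_pos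

end Pendulum

/-- **(Pendulum example: no uniform `C²` dependence on the cohomology class.)**
(1) `c : [1,∞) → [I₊,∞)` is a homeomorphism whose restriction to `(1,∞)` is a
diffeomorphism; (2) each `u_I`, `I ≥ I₊`, is `C¹`; (3) for every `I > I₊` the essential
supremum of `|u_I'' - u_{I₊}''|` is at least `1/4` (indeed `≥ 1/4` holds on a set of
positive measure); in particular (4) `I ↦ u_I` is not continuous at `I₊` for the uniform
`C²` distance. -/
theorem stmt_18 :
    (Set.BijOn pendc (Ici 1) (Ici Iplus) ∧
      ContinuousOn pendc (Ici 1) ∧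
      ContinuousOn pendcInv (Ici Iplus) ∧
      ∀ e ∈ Ioi (1:ℝ), ∃ c' : ℝ, c' ≠ 0 ∧ HasDerivAt pendc c' e ∧
        HasDerivAt pendcInv c'⁻¹ (pendc e)) ∧
    (∀ I ∈ Ici Iplus, ContDiff ℝ 1 (uPend I)) ∧
    (∀ I ∈ Ioi Iplus, 0 < MeasureTheory.volume {q : ℝ | q ∈ Icc (0:ℝ) 1 ∧
      1/4 ≤ |deriv (deriv (uPend I)) q - deriv (deriv (uPend Iplus)) q|}) ∧
    ¬ Tendsto
        (fun I => ⨆ q : Icc (0:ℝ) 1,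
          |deriv (deriv (uPend I)) (q : ℝ) - deriv (deriv (uPend Iplus)) (q : ℝ)|)
        (nhdsWithin Iplus (Ioi Iplus)) (nhds 0) := by
  have h_quarter : (1 / 4 : ℝ) < 2 * π := by linarith [Real.pi_gt_three]
  exact ⟨⟨bijOn_pendc, continuous_pendc.continuousOn, continuousOn_pendcInv,
      fun _ he => exists_hasDerivAt_pendc_pendcInv he⟩,
    fun I _ => contDiff_one_uPend I,
    fun _ hI => volume_setOf_le_secondDerivGap_pos hI h_quarter,
    not_tendsto_iSup_secondDerivGap⟩
end
end
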